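/- arXiv:2203.06625 — 4 statements merged into one kernel-verified Lean document; each statement's English description precedes it below -/
import Mathlib

section
/- Let q ≥ 3 be a prime power, n ≥ 4, and V = F_q^n. For every 2-dimensional subspace X ⊂ V that does not belong to C(n,2)_q, there exist X_1, X_2 ∈ C(n,1)_q such that X + X_1 and X + X_2 are distinct elements of C(n,3)_q and both T^c(X + X_1) and T^c(X + X_2) are maximal cliques of Γ(n,2)_q. -/
/-!
Common definitions: `V = F^n`, coordinate hyperplanes, Grassmannians `G_k(V)`,
non-degenerate linear `[n,k]_q` codes `C(n,k)_q`, adjacency, stars, tops,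
and (maximal) cliques of the graph `Γ(n,k)_q` of non-degenerate codes.
-/

/-- The `i`-th coordinate hyperplane `C_i ⊂ F^n`: the kernel of the `i`-th
coordinate functional. -/
def coordHyp (F : Type*) [Field F] (n : ℕ) (i : Fin n) : Submodule F (Fin n → F) :=
  LinearMap.ker (LinearMap.proj i : (Fin n → F) →ₗ[F] F)

/-- The Grassmannian `G_k(V)`: the set of `k`-dimensional subspaces of `F^n`. -/
def grass (F : Type*) [Field F] (n k : ℕ) : Set (Submodule F (Fin n → F)) :=
  {X | Module.finrank F ↥X = k}

/-- `C(n,k)_q`: the set of non-degenerate linear `[n,k]` codes, i.e. `k`-dimensional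
subspaces of `F^n` not contained in any coordinate hyperplane. -/
def ndCodes (F : Type*) [Field F] (n k : ℕ) : Set (Submodule F (Fin n → F)) :=
  {X | Module.finrank F ↥X = k ∧ ∀ i : Fin n, ¬ X ≤ coordHyp F n i}

/-- Adjacency of `k`-dimensional subspaces: the intersection is `(k-1)`-dimensional. -/
def adjSub (F : Type*) [Field F] (n k : ℕ) (X Y : Submodule F (Fin n → F)) : Prop :=
  Module.finrank F ↥(X ⊓ Y) = k - 1

/-- The star `S(X) ⊂ G_k(V)` of a `(k-1)`-dimensional subspace `X`: all `k`-dimensional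
subspaces containing `X`. -/
def starOf (F : Type*) [Field F] (n k : ℕ) (X : Submodule F (Fin n → F)) :
    Set (Submodule F (Fin n → F)) :=
  {Y | Module.finrank F ↥Y = k ∧ X ≤ Y}

/-- The top `T(Y) ⊂ G_k(V)` of a `(k+1)`-dimensional subspace `Y`: all `k`-dimensional
subspaces of `Y`. -/
def topOf (F : Type*) [Field F] (n k : ℕ) (Y : Submodule F (Fin n → F)) :
    Set (Submodule F (Fin n → F)) :=
  {Z | Module.finrank F ↥Z = k ∧ Z ≤ Y}

/-- `S^c(X) = S(X) ∩ C(n,k)_q`. -/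
def scOf (F : Type*) [Field F] (n k : ℕ) (X : Submodule F (Fin n → F)) :
    Set (Submodule F (Fin n → F)) :=
  starOf F n k X ∩ ndCodes F n k

/-- `T^c(Y) = T(Y) ∩ C(n,k)_q`. -/
def tcOf (F : Type*) [Field F] (n k : ℕ) (Y : Submodule F (Fin n → F)) :
    Set (Submodule F (Fin n → F)) :=
  topOf F n k Y ∩ ndCodes F n k

/-- `c(X)`: the number of coordinate hyperplanes containing the subspace `X`. -/
noncomputable def numHyp (F : Type*) [Field F] (n : ℕ) (X : Submodule F (Fin n → F)) : ℕ :=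
  Set.ncard {i : Fin n | X ≤ coordHyp F n i}

/-- A clique of the graph `Γ(n,k)_q`: a set of non-degenerate `[n,k]` codes that are
pairwise adjacent. -/
def isClique (F : Type*) [Field F] (n k : ℕ) (S : Set (Submodule F (Fin n → F))) : Prop :=
  S ⊆ ndCodes F n k ∧ S.Pairwise (adjSub F n k)

/-- A maximal clique of `Γ(n,k)_q`: a clique not properly contained in another clique. -/
def isMaxClique (F : Type*) [Field F] (n k : ℕ) (S : Set (Submodule F (Fin n → F))) : Prop :=
  isClique F n k S ∧ ∀ T, isClique F n k T → S ⊆ T → T = S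

/-- `[m]_q = q^{m-1} + ⋯ + q + 1 = (q^m - 1)/(q - 1)`. -/
def gaussNum (q m : ℕ) : ℕ := ∑ i ∈ Finset.range m, q ^ i

/-!
Let `Z` have dimension `k + 1`. If a clique containing `T^c(Z)` has a member `Y ⊄ Z`, then every
`L ∈ T^c(Z)` meets `Y` in dimension `k - 1`, which forces `L ∩ Y = Y ∩ Z`; so a fixed
`(k - 1)`-dimensional subspace lies in all members of `T^c(Z)`. This is impossible as soon as `Z`
contains two independent vectors without zero coordinates, because the `k`-dimensional subspaces
of `Z` through such a vector are non-degenerate and intersect in the line it spans.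

Two such vectors in `X + ⟨v⟩` are `v` and `v + x` with `0 ≠ x ∈ X`, where each coordinate `v i`
avoids `0` and `-x i`, as it can in a field with three elements. As `dim X ≥ 2`, one can choose `x`
with `x j = 0` for a given `j`; then two values are still allowed for `v j`, and this freedom lets
`v` avoid any subspace that does not contain the `j`-th unit vector. Avoiding `X` gives `X₁`, and
then avoiding `X + X₁` gives `X₂`.
-/

open Module Submodule

section LinearAlgebra

theorem exists_single_notMem_of_ne_top {R ι : Type*} [Semiring R] [Finite ι] [DecidableEq ι]
    {W : Submodule R (ι → R)} (hW : W ≠ ⊤) : ∃ j, Pi.single j 1 ∉ W := by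
  cases nonempty_fintype ι
  contrapose! hW
  rw [eq_top_iff, ← (Pi.basisFun R ι).span_eq, span_le, Set.range_subset_iff]
  simpa only [Pi.basisFun_apply, SetLike.mem_coe] using hW

theorem exists_mem_pi_notMem_of_single_notMem {K ι : Type*} [DivisionRing K] [DecidableEq ι]
    {W : Submodule K (ι → K)} {j : ι} (hj : Pi.single j 1 ∉ W) {A : ι → Set K}
    (hA : ∀ i, (A i).Nonempty) (hAj : (A j).Nontrivial) : ∃ v ∈ Set.univ.pi A, v ∉ W := by
  obtain ⟨v, hv⟩ := Set.univ_pi_nonempty_iff.2 hA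
  obtain ⟨a, ha, b, hb, hab⟩ := hAj
  have update_mem {c : K} (hc : c ∈ A j) : Function.update v j c ∈ Set.univ.pi A :=
    Set.update_mem_pi_iff_of_mem hv |>.2 fun _ => hc
  by_contra! hW
  have sub_eq : Function.update v j a - Function.update v j b = (a - b) • Pi.single j 1 := by
    rw [← Pi.single_smul, smul_eq_mul, mul_one, ← Function.update_sub, sub_self]
    rfl
  have smul_mem := sub_eq ▸ W.sub_mem (hW _ (update_mem ha)) (hW _ (update_mem hb))
  exact hj ((W.smul_mem_iff (sub_ne_zero.2 hab)).1 smul_mem)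

variable {K V : Type*} [DivisionRing K] [AddCommGroup V] [Module K V]

theorem exists_mem_ne_zero_apply_eq_zero {X : Submodule K V} (hX : 1 < finrank K X)
    (f : V →ₗ[K] K) : ∃ x ∈ X, x ≠ 0 ∧ f x = 0 := by
  have : FiniteDimensional K X := FiniteDimensional.of_finrank_pos (by omega)
  have ker_ne_bot : LinearMap.ker (f.domRestrict X) ≠ ⊥ :=
    LinearMap.ker_ne_bot_of_finrank_lt (by rwa [finrank_self])
  obtain ⟨x, hfx, hx⟩ := exists_mem_ne_zero_of_ne_bot ker_ne_bot
  exact ⟨x, x.2, by simpa using hx, hfx⟩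

theorem exists_finrank_eq_le_notMem {U Z : Submodule K V} {k : ℕ} (hUZ : U ≤ Z)
    (hZ : finrank K Z = k + 1) {p : V} (hpZ : p ∈ Z) (hpU : p ∉ U) :
    ∃ L : Submodule K V, finrank K L = k ∧ U ≤ L ∧ L ≤ Z ∧ p ∉ L := by
  have : FiniteDimensional K Z := FiniteDimensional.of_finrank_pos (by omega)
  obtain ⟨f, hfp, hUf⟩ := exists_le_ker_of_notMem hpU
  refine ⟨Z ⊓ LinearMap.ker f, ?_, le_inf hUZ hUf, inf_le_left, fun hp => hfp hp.2⟩
  have f_ne_zero : f.domRestrict Z ≠ 0 := fun h => hfp (LinearMap.congr_fun h ⟨p, hpZ⟩)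
  have finrank_ker := Dual.finrank_ker_add_one_of_ne_zero f_ne_zero
  rw [LinearMap.ker_domRestrict, hZ] at finrank_ker
  rw [← map_comap_subtype, finrank_map_subtype_eq]
  exact Nat.succ_injective finrank_ker

theorem finrank_inf_eq_sub_one {L M Z : Submodule K V} {k : ℕ} (hZ : finrank K Z = k + 1)
    (hL : finrank K L = k) (hM : finrank K M = k) (hLZ : L ≤ Z) (hMZ : M ≤ Z) (hLM : L ≠ M) :
    finrank K ↥(L ⊓ M) = k - 1 := by
  have : FiniteDimensional K Z := FiniteDimensional.of_finrank_pos (by omega)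
  have : FiniteDimensional K L := finiteDimensional_of_le hLZ
  have : FiniteDimensional K M := finiteDimensional_of_le hMZ
  have lt_sup : L < L ⊔ M := left_lt_sup.2 fun hML =>
    hLM (eq_of_le_of_finrank_eq hML (hM.trans hL.symm)).symm
  have := finrank_lt_finrank_of_lt lt_sup
  have := finrank_mono (sup_le hLZ hMZ)
  have := finrank_sup_add_finrank_inf_eq L M
  omega

theorem add_notMem_span_singleton {X : Submodule K V} {x v : V} (hx : x ∈ X) (hx0 : x ≠ 0)
    (hv : v ∉ X) : v + x ∉ K ∙ v := by
  rw [Submodule.add_mem_iff_right _ (mem_span_singleton_self v)]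
  have hv0 : v ≠ 0 := fun h => hv (h ▸ X.zero_mem)
  exact fun hxv => hx0 (disjoint_def.1 ((disjoint_span_singleton' hv0).2 hv) x hx hxv)

end LinearAlgebra

section Codes

variable {F : Type*} [Field F] {n k : ℕ}

theorem mem_ndCodes_of_forall_ne_zero {L : Submodule F (Fin n → F)} (hL : finrank F L = k)
    {u : Fin n → F} (huL : u ∈ L) (hu : ∀ i, u i ≠ 0) : L ∈ ndCodes F n k :=
  ⟨hL, fun i hi => hu i (hi huL)⟩

theorem span_singleton_mem_ndCodes {v : Fin n → F} (hv0 : v ≠ 0) (hv : ∀ i, v i ≠ 0) :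
    F ∙ v ∈ ndCodes F n 1 :=
  mem_ndCodes_of_forall_ne_zero (finrank_span_singleton hv0) (mem_span_singleton_self v) hv

variable {Z : Submodule F (Fin n → F)}

theorem isClique_tcOf (hZ : finrank F Z = k + 1) : isClique F n k (tcOf F n k Z) :=
  ⟨fun _ hL => hL.2, fun _ hL _ hM hLM =>
    finrank_inf_eq_sub_one hZ hL.1.1 hM.1.1 hL.1.2 hM.1.2 hLM⟩

theorem inf_le_of_adjSub {L Y : Submodule F (Fin n → F)} (hY : finrank F Y = k) (hYZ : ¬Y ≤ Z)
    (hLZ : L ≤ Z) (hLY : adjSub F n k L Y) : Z ⊓ Y ≤ L := by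
  have inf_lt : Z ⊓ Y < Y := inf_lt_right.2 hYZ
  have := finrank_lt_finrank_of_lt inf_lt
  have inf_eq : L ⊓ Y = Z ⊓ Y :=
    eq_of_le_of_finrank_le (inf_le_inf_right Y hLZ) (by rw [hLY]; omega)
  exact inf_eq ▸ inf_le_left

theorem isMaxClique_tcOf_of_finrank_lt (hZ : finrank F Z = k + 1)
    (hinf : finrank F ↥(Z ⊓ sInf (tcOf F n k Z)) + 1 < k) :
    isMaxClique F n k (tcOf F n k Z) := by
  refine ⟨isClique_tcOf hZ, fun T hT hZT => (Set.Subset.antisymm hZT fun Y hY => ?_).symm⟩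
  have hYk := hT.1 hY
  suffices Y ≤ Z from ⟨⟨hYk.1, this⟩, hYk⟩
  by_contra hYZ
  have adj {L} (hL : L ∈ tcOf F n k Z) : adjSub F n k L Y :=
    hT.2 (hZT hL) hY fun hLY => hYZ (hLY ▸ hL.1.2)
  have inf_le : Z ⊓ Y ≤ Z ⊓ sInf (tcOf F n k Z) :=
    le_inf inf_le_left (le_sInf fun L hL => inf_le_of_adjSub hYk.1 hYZ hL.1.2 (adj hL))
  obtain ⟨L, hL⟩ : (tcOf F n k Z).Nonempty := by
    refine Set.nonempty_iff_ne_empty.2 fun h => ?_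
    rw [h, sInf_empty, inf_top_eq] at hinf
    omega
  have adj_finrank : finrank F ↥(L ⊓ Y) = k - 1 := adj hL
  have := finrank_mono ((inf_le_inf_right Y hL.1.2).trans inf_le)
  omega

theorem inf_sInf_tcOf_le_span_singleton (hZ : finrank F Z = k + 1) {u : Fin n → F} (huZ : u ∈ Z)
    (hu : ∀ i, u i ≠ 0) : Z ⊓ sInf (tcOf F n k Z) ≤ F ∙ u := by
  rintro p ⟨hpZ, hp⟩
  by_contra hpu
  obtain ⟨L, hLk, huL, hLZ, hpL⟩ :=
    exists_finrank_eq_le_notMem ((span_singleton_le_iff_mem u Z).2 huZ) hZ hpZ hpu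
  have hL : L ∈ ndCodes F n k :=
    mem_ndCodes_of_forall_ne_zero hLk (huL (mem_span_singleton_self u)) hu
  exact hpL (mem_sInf.1 hp L ⟨⟨hLk, hLZ⟩, hL⟩)

theorem isMaxClique_tcOf (hk : 2 ≤ k) (hZ : finrank F Z = k + 1) {v w : Fin n → F} (hvZ : v ∈ Z)
    (hwZ : w ∈ Z) (hv : ∀ i, v i ≠ 0) (hw : ∀ i, w i ≠ 0) (hwv : w ∉ F ∙ v) :
    isMaxClique F n k (tcOf F n k Z) := by
  have hw0 : w ≠ 0 := fun h => hwv (h ▸ zero_mem _)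
  have inf_eq_bot : Z ⊓ sInf (tcOf F n k Z) = ⊥ :=
    le_bot_iff.1 ((disjoint_span_singleton' hw0).2 hwv
      (inf_sInf_tcOf_le_span_singleton hZ hvZ hv) (inf_sInf_tcOf_le_span_singleton hZ hwZ hw))
  apply isMaxClique_tcOf_of_finrank_lt hZ
  rw [inf_eq_bot, finrank_bot]
  omega

variable {X W : Submodule F (Fin n → F)}

theorem exists_notMem_forall_ne_zero_add_ne_zero (hF : 3 ≤ ENat.card F) (hX : 1 < finrank F X)
    (hW : W ≠ ⊤) :
    ∃ v ∉ W, ∃ x ∈ X, x ≠ 0 ∧ (∀ i, v i ≠ 0) ∧ ∀ i, (v + x) i ≠ 0 := by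
  obtain ⟨j, hj⟩ := exists_single_notMem_of_ne_top hW
  obtain ⟨x, hx, hx0, (hxj : x j = 0)⟩ :=
    exists_mem_ne_zero_apply_eq_zero hX (LinearMap.proj j)
  let A : Fin n → Set F := fun i => {a | a ≠ 0 ∧ a ≠ -x i}
  have hA (i) : (A i).Nonempty := ENat.exists_ne_ne_of_three_le hF _ _
  have hAj : (A j).Nontrivial := by
    obtain ⟨b, hb0, hb1⟩ := ENat.exists_ne_ne_of_three_le hF 0 1
    exact ⟨1, by simp [A, hxj], b, by simp [A, hxj, hb0], hb1.symm⟩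
  obtain ⟨v, hv, hvW⟩ := exists_mem_pi_notMem_of_single_notMem hj hA hAj
  exact ⟨v, hvW, x, hx, hx0, fun i => (hv i trivial).1,
    fun i => mt eq_neg_of_add_eq_zero_left (hv i trivial).2⟩

theorem exists_ndCodes_one_isMaxClique_tcOf_sup (hF : 3 ≤ ENat.card F) (hk : 2 ≤ k)
    (hX : finrank F X = k) (hXW : X ≤ W) (hW : W ≠ ⊤) :
    ∃ P ∈ ndCodes F n 1, ¬P ≤ W ∧ X ⊔ P ∈ ndCodes F n (k + 1) ∧
      isMaxClique F n k (tcOf F n k (X ⊔ P)) := by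
  obtain ⟨v, hvW, x, hx, hx0, hv, hvx⟩ :=
    exists_notMem_forall_ne_zero_add_ne_zero hF (by omega : 1 < finrank F X) hW
  have hvX : v ∉ X := fun h => hvW (hXW h)
  have hv0 : v ≠ 0 := fun h => hvX (h ▸ X.zero_mem)
  have hvZ : v ∈ X ⊔ F ∙ v := mem_sup_right (mem_span_singleton_self v)
  have hvxZ : v + x ∈ X ⊔ F ∙ v := add_mem hvZ (mem_sup_left hx)
  have hZ : finrank F ↥(X ⊔ F ∙ v) = k + 1 := by rw [finrank_sup_span_singleton hvX, hX]
  exact ⟨F ∙ v, span_singleton_mem_ndCodes hv0 hv, by rwa [span_singleton_le_iff_mem],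
    mem_ndCodes_of_forall_ne_zero hZ hvZ hv,
    isMaxClique_tcOf hk hZ hvZ hvxZ hv hvx (add_notMem_span_singleton hx hx0 hvX)⟩

end Codes

theorem stmt_12_general (n k : ℕ) (F : Type*) [Field F] (hF : 3 ≤ ENat.card F) (hk : 2 ≤ k)
    (hn : k + 2 ≤ n) (X : Submodule F (Fin n → F)) (hX : finrank F X = k) :
    ∃ X₁ ∈ ndCodes F n 1, ∃ X₂ ∈ ndCodes F n 1,
      X ⊔ X₁ ≠ X ⊔ X₂ ∧
      X ⊔ X₁ ∈ ndCodes F n (k + 1) ∧ X ⊔ X₂ ∈ ndCodes F n (k + 1) ∧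
      isMaxClique F n k (tcOf F n k (X ⊔ X₁)) ∧
      isMaxClique F n k (tcOf F n k (X ⊔ X₂)) := by
  have ne_top {W : Submodule F (Fin n → F)} (hW : finrank F W ≤ k + 1) : W ≠ ⊤ := by
    rintro rfl
    rw [finrank_top, finrank_fin_fun] at hW
    omega
  obtain ⟨X₁, hX₁, -, hZ₁, hmax₁⟩ :=
    exists_ndCodes_one_isMaxClique_tcOf_sup hF hk hX le_rfl (ne_top (by omega))
  obtain ⟨X₂, hX₂, hX₂Z₁, hZ₂, hmax₂⟩ :=
    exists_ndCodes_one_isMaxClique_tcOf_sup hF hk hX le_sup_left (ne_top hZ₁.1.le)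
  exact ⟨X₁, hX₁, X₂, hX₂, fun h => hX₂Z₁ (h ▸ le_sup_right), hZ₁, hZ₂, hmax₁, hmax₂⟩

/-- (`q ≥ 3`, `n ≥ 4`.) For every 2-dimensional subspace
`X ∉ C(n,2)_q` there are `X₁, X₂ ∈ C(n,1)_q` such that `X + X₁` and `X + X₂` are
distinct elements of `C(n,3)_q` and both `T^c(X + X₁)`, `T^c(X + X₂)` are maximal
cliques (tops) of `Γ(n,2)_q`. -/
theorem stmt_12 (q n : ℕ) (F : Type*) [Field F] [Fintype F]
    (hF : Fintype.card F = q) (hq : 3 ≤ q) (hn : 4 ≤ n)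
    (X : Submodule F (Fin n → F)) (hX : Module.finrank F ↥X = 2)
    (hXd : X ∉ ndCodes F n 2) :
    ∃ X₁ ∈ ndCodes F n 1, ∃ X₂ ∈ ndCodes F n 1,
      X ⊔ X₁ ≠ X ⊔ X₂ ∧
      X ⊔ X₁ ∈ ndCodes F n 3 ∧ X ⊔ X₂ ∈ ndCodes F n 3 ∧
      isMaxClique F n 2 (tcOf F n 2 (X ⊔ X₁)) ∧
      isMaxClique F n 2 (tcOf F n 2 (X ⊔ X₂)) :=
  stmt_12_general n 2 F (by simpa [hF] using hq) le_rfl hn X hX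
end

section
/- Let n ≥ 5 and V = F_2^n, and let T = F_2·(1,…,1) be the unique element of C(n,1)_2. Let G_1'(V) be the set of 1-dimensional subspaces of V of weight at least 3. Suppose f_2 : C(n,2)_2 → G_2(V) and f_3 : C(n,3)_2 → G_3(V) are injective maps sending adjacent pairs to adjacent pairs such that: f_2(S(T)) is a star of Γ_2(V); f_2(X) ⊂ f_3(Z) whenever X ∈ C(n,2)_2, Z ∈ C(n,3)_2 and X ⊂ Z; and g : G_1'(V) → G_1(V) satisfies f_2(S^c(P)) ⊆ S(g(P)) for every P ∈ G_1'(V). Then g is injective. -/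
/-- The set `G₁'(V)` of 1-dimensional subspaces of `F_2^n` of weight at least 3
(the weight being the number of nonzero coordinates of the nonzero vector). -/
def weightGE3 (n : ℕ) : Set (Submodule (ZMod 2) (Fin n → ZMod 2)) :=
  {P | Module.finrank (ZMod 2) ↥P = 1 ∧
    ∃ v ∈ P, v ≠ 0 ∧ 3 ≤ (Finset.univ.filter fun i : Fin n => v i ≠ 0).card}

/-!
Over `F₂` a plane of `V` and its image have equally many lines, and the stars of two lines have
equally many planes. Counting stars, `f₂` maps `S(T)` onto `S(g T)`, so a non-degenerate plane
whose image contains `g T` contains `T`. Hence `g P ≠ g T` for `P ≠ T`, and `g P = g Q` forces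
`P + T = Q + T`, because `f₂ (P + T) = g P + g T`.

Suppose now that `g P = g Q` with `P ≠ Q`, so that `P` and `Q` are spanned by complementary vectors
`p` and `1 + p`. Enlarging each of the two supports by one coordinate of the other gives two vectors
spanning a non-degenerate plane `M` which meets `P + T` trivially and whose lines all have weight at
least 3. Counting lines, `g` maps the lines of `M` onto those of `f₂ M`, so `g P` is not in `f₂ M`.
Therefore `f₃ (M + P) = f₂ M + g P = f₂ M + g Q = f₃ (M + Q)`, which contradicts the injectivity of
`f₃`.
-/

open Module Submodule

section Subspaces

variable {K V : Type*} [Field K] [AddCommGroup V] [Module K V]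

lemma span_singleton_eq_of_finrank_eq_one {P : Submodule K V} (hP : finrank K P = 1) {v : V}
    (hv : v ∈ P) (hv0 : v ≠ 0) : span K {v} = P :=
  ((isAtom_iff_finrank_eq_one.2 hP).le_iff_eq (by simpa using hv0)).1 (by simpa using hv)

lemma finrank_span_pair_of_linearIndependent {u v : V} (h : LinearIndependent K ![u, v]) :
    finrank K (span K {u, v}) = 2 := by
  rw [← Matrix.range_cons_cons_empty u v ![], finrank_span_eq_card h, Fintype.card_fin]

lemma finrank_sup_of_not_le [FiniteDimensional K V] {U P : Submodule K V} (hP : finrank K P = 1)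
    (hPU : ¬ P ≤ U) : finrank K ↥(U ⊔ P) = finrank K U + 1 := by
  have hdisj : P ⊓ U = ⊥ :=
    ((isAtom_iff_finrank_eq_one.2 hP).not_le_iff_disjoint.1 hPU).eq_bot
  have hsum := finrank_sup_add_finrank_inf_eq P U
  rw [hdisj, finrank_bot, hP] at hsum
  rw [sup_comm, ← add_zero (finrank K ↥(P ⊔ U)), hsum, add_comm]

lemma finrank_sup_of_finrank_eq_one [FiniteDimensional K V] {P Q : Submodule K V}
    (hP : finrank K P = 1) (hQ : finrank K Q = 1) (hPQ : P ≠ Q) : finrank K ↥(P ⊔ Q) = 2 := by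
  rw [finrank_sup_of_not_le hQ fun h ↦ hPQ (eq_of_le_of_finrank_eq h (hQ.trans hP.symm)).symm, hP]

lemma exists_linearEquiv_map_eq [FiniteDimensional K V] {W W' : Submodule K V}
    (h : finrank K W = finrank K W') : ∃ e : V ≃ₗ[K] V, W.map (e : V →ₗ[K] V) = W' := by
  let e₀ : W ≃ₗ[K] W' := LinearEquiv.ofFinrankEq W W' h
  obtain ⟨e, he⟩ := exists_linearEquiv_restrict_eq e₀
  refine ⟨e, eq_of_le_of_finrank_eq ?_ (by rw [e.finrank_map_eq, h])⟩
  rintro _ ⟨w, hw, rfl⟩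
  exact (he ⟨w, hw⟩) ▸ (e₀ ⟨w, hw⟩).2

end Subspaces

lemma eq_of_sup_eq_sup_of_disjoint {α : Type*} [Lattice α] [OrderBot α] [IsModularLattice α]
    {a b c d : α} (hd : Disjoint c d) (ha : a ≤ d) (hb : b ≤ d) (h : a ⊔ c = b ⊔ c) : a = b := by
  have cancel {x : α} (hx : x ≤ d) : (x ⊔ c) ⊓ d = x := by
    rw [sup_inf_assoc_of_le c hx, hd.eq_bot, sup_bot_eq]
  rw [← cancel ha, h, cancel hb]

section Grassmannian

variable {F : Type*} [Field F] {n k l : ℕ} {X Y : Submodule F (Fin n → F)}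

lemma mem_ndCodes_iff :
    X ∈ ndCodes F n k ↔ finrank F X = k ∧ ∀ i, ∃ v ∈ X, v i ≠ 0 := by
  simp [ndCodes, coordHyp, SetLike.not_le_iff_exists]

lemma mem_ndCodes_of_le (hX : X ∈ ndCodes F n k) (hXY : X ≤ Y) (hY : finrank F Y = l) :
    Y ∈ ndCodes F n l :=
  ⟨hY, fun i hi ↦ hX.2 i (hXY.trans hi)⟩

lemma ncard_starOf_eq (h : finrank F X = finrank F Y) :
    (starOf F n k X).ncard = (starOf F n k Y).ncard := by
  obtain ⟨e, rfl⟩ := exists_linearEquiv_map_eq h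
  refine Set.ncard_congr' ((orderIsoMapComap e).toEquiv.subtypeEquiv fun Z ↦ ?_)
  simp [starOf, e.finrank_map_eq, map_le_map_iff_of_injective e.injective]

lemma ncard_topOf_eq (h : finrank F X = finrank F Y) :
    (topOf F n k X).ncard = (topOf F n k Y).ncard := by
  obtain ⟨e, rfl⟩ := exists_linearEquiv_map_eq h
  refine Set.ncard_congr' ((orderIsoMapComap e).toEquiv.subtypeEquiv fun Z ↦ ?_)
  simp [topOf, e.finrank_map_eq, map_le_map_iff_of_injective e.injective]

variable [Finite F] {f : Submodule F (Fin n → F) → Submodule F (Fin n → F)}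

lemma image_starOf_eq (hXY : finrank F X = finrank F Y) (hf : Set.InjOn f (starOf F n k X))
    (hsub : f '' starOf F n k X ⊆ starOf F n k Y) :
    f '' starOf F n k X = starOf F n k Y :=
  Set.eq_of_subset_of_ncard_le hsub (by rw [hf.ncard_image, ncard_starOf_eq hXY])

lemma image_topOf_eq (hXY : finrank F X = finrank F Y) (hf : Set.InjOn f (topOf F n k X))
    (hsub : f '' topOf F n k X ⊆ topOf F n k Y) :
    f '' topOf F n k X = topOf F n k Y :=
  Set.eq_of_subset_of_ncard_le hsub (by rw [hf.ncard_image, ncard_topOf_eq hXY])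

end Grassmannian

section BinarySpans

variable {V : Type*} [AddCommGroup V] [Module (ZMod 2) V] {u v w : V}

lemma exists_zmod_two {r : ZMod 2 → Prop} : (∃ a, r a) ↔ r 0 ∨ r 1 :=
  Fin.exists_fin_two

lemma mem_span_pair_zmod_two :
    w ∈ span (ZMod 2) {u, v} ↔ w = 0 ∨ w = v ∨ w = u ∨ w = u + v := by
  simp [mem_span_pair, exists_zmod_two, eq_comm, or_assoc]

end BinarySpans

section BinaryVectors

variable {n : ℕ} {p u v : Fin n → ZMod 2} {i j k l : Fin n}

lemma hammingNorm_add_hammingNorm_one_add (v : Fin n → ZMod 2) :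
    hammingNorm v + hammingNorm (1 + v) = n := by
  have hcompl (i : Fin n) : (1 + v) i ≠ 0 ↔ ¬ v i ≠ 0 := by
    rw [Pi.add_apply, Pi.one_apply]
    generalize v i = x
    decide +revert
  simp only [hammingNorm, hcompl]
  simpa using Finset.card_filter_add_card_filter_not (s := Finset.univ) fun i ↦ v i ≠ 0

lemma hammingNorm_le_of_support_subset (h : ∀ i, u i ≠ 0 → v i ≠ 0) :
    hammingNorm u ≤ hammingNorm v :=
  Finset.card_le_card (Finset.monotone_filter_right _ fun i _ ↦ h i)

lemma hammingNorm_single_add_single_le (i k : Fin n) (a b : ZMod 2) :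
    hammingNorm (Pi.single i a + Pi.single k b : Fin n → ZMod 2) ≤ 2 := by
  refine (Finset.card_le_card fun x hx ↦ ?_).trans (Finset.card_le_two (a := i) (b := k))
  contrapose! hx
  simp_all [Pi.single_apply]

lemma mem_weightGE3_iff {P : Submodule (ZMod 2) (Fin n → ZMod 2)} :
    P ∈ weightGE3 n ↔ ∃ v, 3 ≤ hammingNorm v ∧ span (ZMod 2) {v} = P := by
  constructor
  · rintro ⟨hP, v, hv, hv0, hwt⟩
    exact ⟨v, hwt, span_singleton_eq_of_finrank_eq_one hP hv hv0⟩
  · rintro ⟨v, hwt, rfl⟩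
    have hv0 : v ≠ 0 := hammingNorm_pos_iff.1 (by lia)
    exact ⟨finrank_span_singleton hv0, v, mem_span_singleton_self v, hv0, hwt⟩

lemma three_le_of_mem_weightGE3 {P : Submodule (ZMod 2) (Fin n → ZMod 2)}
    (hP : P ∈ weightGE3 n) : 3 ≤ n := by
  obtain ⟨p, hp, -⟩ := mem_weightGE3_iff.1 hP
  simpa using hp.trans hammingNorm_le_card_fintype

lemma topOf_one_subset_weightGE3 {X : Submodule (ZMod 2) (Fin n → ZMod 2)}
    (h : ∀ v ∈ X, v ≠ 0 → 3 ≤ hammingNorm v) : topOf (ZMod 2) n 1 X ⊆ weightGE3 n := by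
  rintro P ⟨hP, hPX⟩
  obtain ⟨v, hv, hv0⟩ := P.ne_bot_iff.1 (isAtom_iff_finrank_eq_one.2 hP).ne_bot
  exact ⟨hP, v, hv, hv0, h v (hPX hv) hv0⟩

lemma exists_ne_apply_eq_one (h : 2 ≤ hammingNorm v) : ∃ i j, i ≠ j ∧ v i = 1 ∧ v j = 1 := by
  obtain ⟨i, hi, j, hj, hij⟩ := Finset.one_lt_card.1 h
  exact ⟨i, j, hij, Fin.eq_one_of_ne_zero _ (Finset.mem_filter.1 hi).2,
    Fin.eq_one_of_ne_zero _ (Finset.mem_filter.1 hj).2⟩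

/-- The line `T` spanned by the all-ones vector, the unique non-degenerate `[n,1]_2` code. -/
def allOnes (n : ℕ) : Submodule (ZMod 2) (Fin n → ZMod 2) :=
  span (ZMod 2) {1}

lemma allOnes_mem_weightGE3 (hn : 3 ≤ n) : allOnes n ∈ weightGE3 n :=
  mem_weightGE3_iff.2 ⟨1, by simpa [hammingNorm] using hn, rfl⟩

lemma mem_ndCodes_of_allOnes_le {X : Submodule (ZMod 2) (Fin n → ZMod 2)} {d : ℕ}
    (hX : finrank (ZMod 2) X = d) (hT : allOnes n ≤ X) : X ∈ ndCodes (ZMod 2) n d :=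
  mem_ndCodes_iff.2 ⟨hX, fun _ ↦ ⟨1, hT (mem_span_singleton_self 1), one_ne_zero⟩⟩

/-- The vector whose support is the complement of that of `p` together with `i`, where `i` is in
the support of `p`. -/
def overlap (p : Fin n → ZMod 2) (i : Fin n) : Fin n → ZMod 2 :=
  1 + p + Pi.single i 1

lemma overlap_apply (p : Fin n → ZMod 2) (i x : Fin n) :
    overlap p i x = 1 + p x + if x = i then 1 else 0 := by
  simp [overlap, Pi.single_apply]

lemma overlap_apply_self (hi : p i = 1) : overlap p i i = 1 := by
  simp [overlap_apply, hi, ZModModule.add_self]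

lemma overlap_apply_of_ne (hij : j ≠ i) : overlap p i j = 1 + p j := by
  simp [overlap_apply, hij]

lemma span_pair_overlap_mem_ndCodes (hi : p i = 1) (hj : p j = 1) (hij : i ≠ j) :
    span (ZMod 2) {p, overlap p i} ∈ ndCodes (ZMod 2) n 2 := by
  have hself := overlap_apply_self hi
  have hj' : overlap p i j = 0 := by simp [overlap_apply_of_ne hij.symm, hj, ZModModule.add_self]
  refine mem_ndCodes_iff.2 ⟨finrank_span_pair_of_linearIndependent ?_, fun x ↦ ?_⟩
  · refine LinearIndependent.pair_iff.2 fun a b hab ↦ ?_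
    have ha : a = 0 := by simpa [hj, hj'] using congrFun hab j
    exact ⟨ha, by simpa [ha, hself] using congrFun hab i⟩
  · by_cases hpx : p x = 0
    · have hxi : x ≠ i := by rintro rfl; simp [hpx] at hi
      exact ⟨overlap p i, subset_span (by simp), by simp [overlap_apply_of_ne hxi, hpx]⟩
    · exact ⟨p, subset_span (by simp), hpx⟩

lemma one_notMem_span_pair_overlap (hi : p i = 1) (hj : p j = 1) (hij : i ≠ j) (hp : p ≠ 1) :
    1 ∉ span (ZMod 2) {p, overlap p i} := by
  intro h
  obtain ⟨a, b, hab⟩ := mem_span_pair.1 h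
  have ha : a = 1 := by
    simpa [hj, overlap_apply_of_ne hij.symm, ZModModule.add_self] using congrFun hab j
  have hb : b = 0 := by simpa [ha, hi, overlap_apply_self hi] using congrFun hab i
  exact hp (by simpa [ha, hb] using hab)

lemma exists_mem_ndCodes_not_allOnes_le {P : Submodule (ZMod 2) (Fin n → ZMod 2)}
    (hP : P ∈ weightGE3 n) (hPT : P ≠ allOnes n) :
    ∃ X ∈ ndCodes (ZMod 2) n 2, P ≤ X ∧ ¬ allOnes n ≤ X := by
  obtain ⟨p, hp, rfl⟩ := mem_weightGE3_iff.1 hP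
  obtain ⟨i, j, hij, hi, hj⟩ := exists_ne_apply_eq_one (by lia : 2 ≤ hammingNorm p)
  refine ⟨_, span_pair_overlap_mem_ndCodes hi hj hij, span_mono (by simp), fun h ↦ ?_⟩
  refine one_notMem_span_pair_overlap hi hj hij ?_ (h (mem_span_singleton_self 1))
  rintro rfl
  exact hPT rfl

/-- The plane `M` spanned by the vectors that enlarge the supports of `1 + p` and `p` by a
coordinate `i` of `p` and a coordinate `k` of `1 + p`, respectively. -/
def overlapPlane (p : Fin n → ZMod 2) (i k : Fin n) : Submodule (ZMod 2) (Fin n → ZMod 2) :=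
  span (ZMod 2) {overlap p i, overlap (1 + p) k}

lemma overlap_one_add_apply_self (hk : p k = 0) : overlap (1 + p) k k = 1 :=
  overlap_apply_self (by simp [hk])

lemma overlap_one_add_apply_of_ne (hjk : j ≠ k) : overlap (1 + p) k j = p j := by
  simp [overlap_apply_of_ne hjk, ← add_assoc, ZModModule.add_self]

lemma overlap_add_overlap_one_add (p : Fin n → ZMod 2) (i k : Fin n) :
    overlap p i + overlap (1 + p) k = 1 + (Pi.single i 1 + Pi.single k 1) :=
  calc overlap p i + overlap (1 + p) k
      = (1 + p) + (1 + p) + (1 + (Pi.single i 1 + Pi.single k 1)) := by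
        simp only [overlap]
        abel
    _ = 1 + (Pi.single i 1 + Pi.single k 1) := by rw [ZModModule.add_self, zero_add]

lemma overlapPlane_mem_ndCodes (hi : p i = 1) (hj : p j = 1) (hij : i ≠ j)
    (hk : p k = 0) (hl : p l = 0) (hkl : k ≠ l) :
    overlapPlane p i k ∈ ndCodes (ZMod 2) n 2 := by
  have hjk : j ≠ k := by rintro rfl; simp [hj] at hk
  have hli : l ≠ i := by rintro rfl; simp [hi] at hl
  refine mem_ndCodes_iff.2 ⟨finrank_span_pair_of_linearIndependent ?_, fun x ↦ ?_⟩
  · refine LinearIndependent.pair_iff.2 fun a b hab ↦ ⟨?_, ?_⟩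
    · simpa [overlap_apply_of_ne hli, overlap_one_add_apply_of_ne hkl.symm, hl]
        using congrFun hab l
    · simpa [overlap_apply_of_ne hij.symm, overlap_one_add_apply_of_ne hjk, hj,
        ZModModule.add_self] using congrFun hab j
  · have hm : overlap p i ∈ overlapPlane p i k := subset_span (by simp)
    have hm' : overlap (1 + p) k ∈ overlapPlane p i k := subset_span (by simp)
    by_cases hxi : x = i
    · exact ⟨_, hm, by simp [hxi, overlap_apply_self hi]⟩
    by_cases hxk : x = k
    · exact ⟨_, hm', by simp [hxk, overlap_one_add_apply_self hk]⟩
    · refine ⟨_, add_mem hm hm', ?_⟩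
      rw [overlap_add_overlap_one_add]
      simp [hxi, hxk]

lemma disjoint_overlapPlane (hi : p i = 1) (hj : p j = 1) (hij : i ≠ j)
    (hk : p k = 0) (hl : p l = 0) (hkl : k ≠ l) :
    Disjoint (overlapPlane p i k) (span (ZMod 2) {p} ⊔ allOnes n) := by
  have hik : i ≠ k := by rintro rfl; simp [hi] at hk
  have hjk : j ≠ k := by rintro rfl; simp [hj] at hk
  have hli : l ≠ i := by rintro rfl; simp [hi] at hl
  rw [allOnes, ← span_insert, disjoint_def]
  intro v hvM hv
  obtain ⟨a, b, rfl⟩ := mem_span_pair.1 hvM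
  obtain ⟨c, d, hcd⟩ := mem_span_pair.1 hv
  have eq_i : c + d = a + b := by
    simpa [overlap_apply_self hi, overlap_one_add_apply_of_ne hik, hi] using congrFun hcd i
  have eq_j : c + d = b := by
    simpa [overlap_apply_of_ne hij.symm, overlap_one_add_apply_of_ne hjk, hj,
      ZModModule.add_self] using congrFun hcd j
  have eq_k : d = a + b := by
    simpa [overlap_apply_of_ne hik.symm, overlap_one_add_apply_self hk, hk] using congrFun hcd k
  have eq_l : d = a := by
    simpa [overlap_apply_of_ne hli, overlap_one_add_apply_of_ne hkl.symm, hl] using congrFun hcd l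
  have ha : a = 0 := by linear_combination eq_j - eq_i
  have hb : b = 0 := by linear_combination eq_l - eq_k
  simp [ha, hb]

lemma hammingNorm_one_add_le_overlap (hi : p i = 1) :
    hammingNorm (1 + p) ≤ hammingNorm (overlap p i) := by
  refine hammingNorm_le_of_support_subset fun x hx ↦ ?_
  have hxi : x ≠ i := by
    rintro rfl
    simp [hi, ZModModule.add_self] at hx
  rwa [overlap_apply_of_ne hxi]

lemma three_le_hammingNorm_of_mem_overlapPlane (hi : p i = 1) (hk : p k = 0)
    (hp : 3 ≤ hammingNorm p) (hp' : 3 ≤ hammingNorm (1 + p)) (hv : v ∈ overlapPlane p i k)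
    (hv0 : v ≠ 0) : 3 ≤ hammingNorm v := by
  rcases mem_span_pair_zmod_two.1 hv with rfl | rfl | rfl | rfl
  · exact absurd rfl hv0
  · refine (?_ : 3 ≤ hammingNorm (1 + (1 + p))).trans
      (hammingNorm_one_add_le_overlap (by simp [hk]))
    rwa [← add_assoc, ZModModule.add_self, zero_add]
  · exact hp'.trans (hammingNorm_one_add_le_overlap hi)
  · have hn := hammingNorm_add_hammingNorm_one_add p
    have hsum := hammingNorm_add_hammingNorm_one_add (Pi.single i 1 + Pi.single k 1)
    have hle := hammingNorm_single_add_single_le i k 1 1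
    rw [overlap_add_overlap_one_add]
    lia

end BinaryVectors

section ComplementaryLines

variable {n : ℕ} {P Q : Submodule (ZMod 2) (Fin n → ZMod 2)}

lemma exists_span_eq_and_span_one_add_eq (hP : P ∈ weightGE3 n) (hQ : Q ∈ weightGE3 n)
    (hPQ : P ≠ Q) (h : P ⊔ allOnes n = Q ⊔ allOnes n) :
    ∃ p, 3 ≤ hammingNorm p ∧ 3 ≤ hammingNorm (1 + p) ∧
      span (ZMod 2) {p} = P ∧ span (ZMod 2) {1 + p} = Q := by
  obtain ⟨p, hp, rfl⟩ := mem_weightGE3_iff.1 hP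
  obtain ⟨q, hq, rfl⟩ := mem_weightGE3_iff.1 hQ
  have hq_mem : q ∈ span (ZMod 2) {1, p} := by
    rw [span_insert, sup_comm]
    exact h ▸ mem_sup_left (mem_span_singleton_self q)
  rcases mem_span_pair_zmod_two.1 hq_mem with rfl | rfl | rfl | rfl
  · simp at hq
  · exact absurd rfl hPQ
  · refine absurd (span_singleton_eq_of_finrank_eq_one hQ.1 ?_ (hammingNorm_pos_iff.1 (by lia))) hPQ
    change _ ⊔ allOnes n = allOnes n ⊔ allOnes n at h
    rw [sup_idem] at h
    exact h.le (mem_sup_left (mem_span_singleton_self p))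
  · exact ⟨p, hp, hq, rfl, rfl⟩

lemma exists_disjoint_plane (hP : P ∈ weightGE3 n) (hQ : Q ∈ weightGE3 n)
    (hPQ : P ≠ Q) (h : P ⊔ allOnes n = Q ⊔ allOnes n) :
    ∃ M ∈ ndCodes (ZMod 2) n 2, Disjoint M (P ⊔ allOnes n) ∧
      topOf (ZMod 2) n 1 M ⊆ weightGE3 n ∧
      (∃ X ∈ ndCodes (ZMod 2) n 2, P ≤ X ∧ X ≤ M ⊔ P) ∧
      ∃ Y ∈ ndCodes (ZMod 2) n 2, Q ≤ Y ∧ Y ≤ M ⊔ Q := by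
  obtain ⟨p, hp, hp', rfl, rfl⟩ := exists_span_eq_and_span_one_add_eq hP hQ hPQ h
  obtain ⟨i, j, hij, hi, hj⟩ := exists_ne_apply_eq_one (by lia : 2 ≤ hammingNorm p)
  obtain ⟨k, l, hkl, hk', hl'⟩ := exists_ne_apply_eq_one (by lia : 2 ≤ hammingNorm (1 + p))
  have hk : p k = 0 := by simpa using hk'
  have hl : p l = 0 := by simpa using hl'
  refine ⟨overlapPlane p i k, overlapPlane_mem_ndCodes hi hj hij hk hl hkl,
    disjoint_overlapPlane hi hj hij hk hl hkl,
    topOf_one_subset_weightGE3 fun _ ↦ three_le_hammingNorm_of_mem_overlapPlane hi hk hp hp',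
    ⟨_, span_pair_overlap_mem_ndCodes hi hj hij, span_mono (by simp), ?_⟩,
    ⟨_, span_pair_overlap_mem_ndCodes hk' hl' hkl, span_mono (by simp), ?_⟩⟩
  all_goals
    rw [overlapPlane, ← span_union]
    exact span_mono (by simp [Set.insert_subset_iff])

end ComplementaryLines

section InducedMaps

variable {n : ℕ}
  {f₂ f₃ g : Submodule (ZMod 2) (Fin n → ZMod 2) → Submodule (ZMod 2) (Fin n → ZMod 2)}
  {M P Q X : Submodule (ZMod 2) (Fin n → ZMod 2)}

lemma map_le_of_le
    (hg : ∀ P ∈ weightGE3 n, f₂ '' scOf (ZMod 2) n 2 P ⊆ starOf (ZMod 2) n 2 (g P))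
    (hP : P ∈ weightGE3 n) (hX : X ∈ ndCodes (ZMod 2) n 2) (hPX : P ≤ X) : g P ≤ f₂ X :=
  (hg P hP ⟨X, ⟨⟨hX.1, hPX⟩, hX⟩, rfl⟩).2

lemma map_sup_eq (hmem₂ : ∀ X ∈ ndCodes (ZMod 2) n 2, f₂ X ∈ grass (ZMod 2) n 2)
    (hmem₃ : ∀ Z ∈ ndCodes (ZMod 2) n 3, f₃ Z ∈ grass (ZMod 2) n 3)
    (hcompat : ∀ X ∈ ndCodes (ZMod 2) n 2, ∀ Z ∈ ndCodes (ZMod 2) n 3, X ≤ Z → f₂ X ≤ f₃ Z)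
    (hgmem : ∀ P ∈ weightGE3 n, g P ∈ grass (ZMod 2) n 1)
    (hg : ∀ P ∈ weightGE3 n, f₂ '' scOf (ZMod 2) n 2 P ⊆ starOf (ZMod 2) n 2 (g P))
    (hP : P ∈ weightGE3 n) (hX : X ∈ ndCodes (ZMod 2) n 2) (hPX : P ≤ X) (hXM : X ≤ M ⊔ P)
    (hM : M ∈ ndCodes (ZMod 2) n 2) (hZ : M ⊔ P ∈ ndCodes (ZMod 2) n 3)
    (hgP : ¬ g P ≤ f₂ M) : f₃ (M ⊔ P) = f₂ M ⊔ g P := by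
  have hle : f₂ M ⊔ g P ≤ f₃ (M ⊔ P) :=
    sup_le (hcompat M hM _ hZ le_sup_left)
      ((map_le_of_le hg hP hX hPX).trans (hcompat X hX _ hZ hXM))
  refine (eq_of_le_of_finrank_eq hle ?_).symm
  rw [finrank_sup_of_not_le (hgmem P hP) hgP, hmem₂ M hM, hmem₃ _ hZ]

variable (hmem₂ : ∀ X ∈ ndCodes (ZMod 2) n 2, f₂ X ∈ grass (ZMod 2) n 2)
  (hinj₂ : Set.InjOn f₂ (ndCodes (ZMod 2) n 2))
  (hgmem : ∀ P ∈ weightGE3 n, g P ∈ grass (ZMod 2) n 1)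
  (hg : ∀ P ∈ weightGE3 n, f₂ '' scOf (ZMod 2) n 2 P ⊆ starOf (ZMod 2) n 2 (g P))

include hinj₂ hgmem hg in
lemma image_starOf_allOnes_eq (hT : allOnes n ∈ weightGE3 n) :
    f₂ '' starOf (ZMod 2) n 2 (allOnes n) = starOf (ZMod 2) n 2 (g (allOnes n)) := by
  have hstar : starOf (ZMod 2) n 2 (allOnes n) ⊆ ndCodes (ZMod 2) n 2 :=
    fun Y hY ↦ mem_ndCodes_of_allOnes_le hY.1 hY.2
  refine image_starOf_eq (hT.1.trans (hgmem _ hT).symm) (hinj₂.mono hstar) ?_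
  simpa only [scOf, Set.inter_eq_left.2 hstar] using hg _ hT

include hmem₂ hinj₂ hgmem hg

lemma allOnes_le_of_map_allOnes_le (hT : allOnes n ∈ weightGE3 n)
    (hX : X ∈ ndCodes (ZMod 2) n 2) (h : g (allOnes n) ≤ f₂ X) : allOnes n ≤ X := by
  obtain ⟨Y, hY, hYX⟩ := (image_starOf_allOnes_eq hinj₂ hgmem hg hT).ge ⟨hmem₂ X hX, h⟩
  exact hinj₂ (mem_ndCodes_of_allOnes_le hY.1 hY.2) hX hYX ▸ hY.2

lemma map_ne_map_allOnes (hP : P ∈ weightGE3 n) (hPT : P ≠ allOnes n) :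
    g P ≠ g (allOnes n) := by
  intro h
  obtain ⟨X, hX, hPX, hTX⟩ := exists_mem_ndCodes_not_allOnes_le hP hPT
  have hT := allOnes_mem_weightGE3 (three_le_of_mem_weightGE3 hP)
  exact hTX (allOnes_le_of_map_allOnes_le hmem₂ hinj₂ hgmem hg hT hX
    (h ▸ map_le_of_le hg hP hX hPX))

lemma map_sup_allOnes_eq (hP : P ∈ weightGE3 n) (hPT : P ≠ allOnes n) :
    f₂ (P ⊔ allOnes n) = g P ⊔ g (allOnes n) := by
  have hT := allOnes_mem_weightGE3 (three_le_of_mem_weightGE3 hP)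
  have hsup := mem_ndCodes_of_allOnes_le (finrank_sup_of_finrank_eq_one hP.1 hT.1 hPT) le_sup_right
  have hle : g P ⊔ g (allOnes n) ≤ f₂ (P ⊔ allOnes n) :=
    sup_le (map_le_of_le hg hP hsup le_sup_left) (map_le_of_le hg hT hsup le_sup_right)
  refine (eq_of_le_of_finrank_eq hle ?_).symm
  rw [finrank_sup_of_finrank_eq_one (hgmem P hP) (hgmem _ hT)
    (map_ne_map_allOnes hmem₂ hinj₂ hgmem hg hP hPT), hmem₂ _ hsup]

lemma sup_allOnes_eq_of_map_eq (hP : P ∈ weightGE3 n) (hQ : Q ∈ weightGE3 n)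
    (h : g P = g Q) : P ⊔ allOnes n = Q ⊔ allOnes n := by
  have hne {R} (hR : R ∈ weightGE3 n) := map_ne_map_allOnes hmem₂ hinj₂ hgmem hg hR
  have hT := allOnes_mem_weightGE3 (three_le_of_mem_weightGE3 hP)
  have hsup {R} (hR : R ∈ weightGE3 n) (hRT : R ≠ allOnes n) : R ⊔ allOnes n ∈ ndCodes _ n 2 :=
    mem_ndCodes_of_allOnes_le (finrank_sup_of_finrank_eq_one hR.1 hT.1 hRT) le_sup_right
  by_cases hPT : P = allOnes n
  · rw [hPT, not_imp_not.1 (hne hQ) (by rw [← h, hPT])]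
  by_cases hQT : Q = allOnes n
  · exact absurd (h.trans (by rw [hQT])) (hne hP hPT)
  · refine hinj₂ (hsup hP hPT) (hsup hQ hQT) ?_
    rw [map_sup_allOnes_eq hmem₂ hinj₂ hgmem hg hP hPT,
      map_sup_allOnes_eq hmem₂ hinj₂ hgmem hg hQ hQT, h]

lemma injOn_topOf_of_disjoint_allOnes (hMw : topOf (ZMod 2) n 1 M ⊆ weightGE3 n)
    (hMT : Disjoint M (allOnes n)) : Set.InjOn g (topOf (ZMod 2) n 1 M) :=
  fun _ hA _ hB hAB ↦ eq_of_sup_eq_sup_of_disjoint hMT.symm hA.2 hB.2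
    (sup_allOnes_eq_of_map_eq hmem₂ hinj₂ hgmem hg (hMw hA) (hMw hB) hAB)

lemma not_map_le_of_disjoint (hP : P ∈ weightGE3 n) (hM : M ∈ ndCodes (ZMod 2) n 2)
    (hMw : topOf (ZMod 2) n 1 M ⊆ weightGE3 n) (hMPT : Disjoint M (P ⊔ allOnes n)) :
    ¬ g P ≤ f₂ M := by
  intro hle
  have himage : g '' topOf (ZMod 2) n 1 M = topOf (ZMod 2) n 1 (f₂ M) := by
    refine image_topOf_eq (hM.1.trans (hmem₂ M hM).symm) (injOn_topOf_of_disjoint_allOnes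
      hmem₂ hinj₂ hgmem hg hMw (hMPT.mono_right le_sup_right)) ?_
    rintro _ ⟨A, hA, rfl⟩
    exact ⟨hgmem A (hMw hA), map_le_of_le hg (hMw hA) hM hA.2⟩
  obtain ⟨A, hA, hAP⟩ := himage.ge ⟨hgmem P hP, hle⟩
  have hAPT : A ≤ P ⊔ allOnes n :=
    sup_allOnes_eq_of_map_eq hmem₂ hinj₂ hgmem hg (hMw hA) hP hAP ▸ le_sup_left
  exact (isAtom_iff_finrank_eq_one.2 hA.1).ne_bot (le_bot_iff.1 (hMPT hA.2 hAPT))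

end InducedMaps

theorem stmt_15_general (n : ℕ)
    (f₂ f₃ g : Submodule (ZMod 2) (Fin n → ZMod 2) → Submodule (ZMod 2) (Fin n → ZMod 2))
    (hmem₂ : ∀ X ∈ ndCodes (ZMod 2) n 2, f₂ X ∈ grass (ZMod 2) n 2)
    (hinj₂ : Set.InjOn f₂ (ndCodes (ZMod 2) n 2))
    (hmem₃ : ∀ Z ∈ ndCodes (ZMod 2) n 3, f₃ Z ∈ grass (ZMod 2) n 3)
    (hinj₃ : Set.InjOn f₃ (ndCodes (ZMod 2) n 3))
    (hcompat : ∀ X ∈ ndCodes (ZMod 2) n 2, ∀ Z ∈ ndCodes (ZMod 2) n 3, X ≤ Z → f₂ X ≤ f₃ Z)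
    (hgmem : ∀ P ∈ weightGE3 n, g P ∈ grass (ZMod 2) n 1)
    (hg : ∀ P ∈ weightGE3 n, f₂ '' scOf (ZMod 2) n 2 P ⊆ starOf (ZMod 2) n 2 (g P)) :
    Set.InjOn g (weightGE3 n) := by
  intro P hP Q hQ hPQ
  by_contra hne
  have hsup := sup_allOnes_eq_of_map_eq hmem₂ hinj₂ hgmem hg hP hQ hPQ
  obtain ⟨M, hM, hdisj, hMw, ⟨X, hX, hPX, hXM⟩, ⟨Y, hY, hQY, hYM⟩⟩ :=
    exists_disjoint_plane hP hQ hne hsup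
  have hsolid {R} (hR : R ∈ weightGE3 n) (hMR : Disjoint M R) : M ⊔ R ∈ ndCodes _ n 3 := by
    have hRM := (isAtom_iff_finrank_eq_one.2 hR.1).not_le_iff_disjoint.2 hMR.symm
    exact mem_ndCodes_of_le hM le_sup_left (by rw [finrank_sup_of_not_le hR.1 hRM, hM.1])
  have hMP := hsolid hP (hdisj.mono_right le_sup_left)
  have hMQ := hsolid hQ (hdisj.mono_right (hsup ▸ le_sup_left))
  have hgP := not_map_le_of_disjoint hmem₂ hinj₂ hgmem hg hP hM hMw hdisj
  have hsolid_eq : M ⊔ P = M ⊔ Q := by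
    refine hinj₃ hMP hMQ ?_
    rw [map_sup_eq hmem₂ hmem₃ hcompat hgmem hg hP hX hPX hXM hM hMP hgP,
      map_sup_eq hmem₂ hmem₃ hcompat hgmem hg hQ hY hQY hYM hM hMQ (hPQ ▸ hgP), hPQ]
  refine hne (eq_of_sup_eq_sup_of_disjoint hdisj le_sup_left (hsup ▸ le_sup_left) ?_)
  rw [sup_comm P, sup_comm Q, hsolid_eq]

/-- (`q = 2`, `n ≥ 5`.) Let `T = F₂·(1,…,1)` be the unique element of
`C(n,1)_2`. Suppose `f₂ : C(n,2)_2 → G_2(V)` and `f₃ : C(n,3)_2 → G_3(V)` are injective,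
adjacency-preserving, `f₂(S(T))` is a star of `Γ_2(V)`, `f₂ X ⊂ f₃ Z` whenever `X ⊂ Z`,
and `g : G₁'(V) → G_1(V)` satisfies `f₂(S^c(P)) ⊆ S(g(P))` for every `P ∈ G₁'(V)`.
Then `g` is injective. -/
theorem stmt_15 (n : ℕ) (hn : 5 ≤ n)
    (T : Submodule (ZMod 2) (Fin n → ZMod 2))
    (hT : T = Submodule.span (ZMod 2) {(fun _ => 1 : Fin n → ZMod 2)})
    (f₂ f₃ g : Submodule (ZMod 2) (Fin n → ZMod 2) → Submodule (ZMod 2) (Fin n → ZMod 2))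
    (hmem₂ : ∀ X ∈ ndCodes (ZMod 2) n 2, f₂ X ∈ grass (ZMod 2) n 2)
    (hinj₂ : Set.InjOn f₂ (ndCodes (ZMod 2) n 2))
    (hadj₂ : ∀ X ∈ ndCodes (ZMod 2) n 2, ∀ Y ∈ ndCodes (ZMod 2) n 2,
      adjSub (ZMod 2) n 2 X Y → adjSub (ZMod 2) n 2 (f₂ X) (f₂ Y))
    (hmem₃ : ∀ X ∈ ndCodes (ZMod 2) n 3, f₃ X ∈ grass (ZMod 2) n 3)
    (hinj₃ : Set.InjOn f₃ (ndCodes (ZMod 2) n 3))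
    (hadj₃ : ∀ X ∈ ndCodes (ZMod 2) n 3, ∀ Y ∈ ndCodes (ZMod 2) n 3,
      adjSub (ZMod 2) n 3 X Y → adjSub (ZMod 2) n 3 (f₃ X) (f₃ Y))
    (hstarT : ∃ P' : Submodule (ZMod 2) (Fin n → ZMod 2),
      Module.finrank (ZMod 2) ↥P' = 1 ∧
        f₂ '' starOf (ZMod 2) n 2 T = starOf (ZMod 2) n 2 P')
    (hcompat : ∀ X ∈ ndCodes (ZMod 2) n 2, ∀ Z ∈ ndCodes (ZMod 2) n 3,
      X ≤ Z → f₂ X ≤ f₃ Z)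
    (hgmem : ∀ P ∈ weightGE3 n, g P ∈ grass (ZMod 2) n 1)
    (hg : ∀ P ∈ weightGE3 n, f₂ '' scOf (ZMod 2) n 2 P ⊆ starOf (ZMod 2) n 2 (g P)) :
    Set.InjOn g (weightGE3 n) :=
  stmt_15_general n f₂ f₃ g hmem₂ hinj₂ hmem₃ hinj₃ hcompat hgmem hg
end

section
/- Let 1 < k < n−1 and V = F_2^n. For every (k−1)-dimensional subspace X ⊂ V with c(X) ≤ n−k, there exist Y, Y' ∈ C(n,k)_2 such that X = Y ∩ Y' and each of Y and Y' contains the all-ones vector (1,…,1) or a vector of the form (1,…,1) + e_i for some i ∈ {1,…,n}, where e_i is the i-th standard basis vector. -/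
/-!
If `X` lies in no coordinate hyperplane and contains some `1 + a • eᵢ`, any two distinct
extensions of `X` by one dimension form the required pair. Otherwise choose `i` with `X ⊄ Cᵢ` and
`eᵢ ∉ X`; it exists because the bound on `c(X)` leaves more than `dim X` coordinates not vanishing
on `X`, so not all of their basis vectors lie in `X`. The pair is then `X + ⟨1⟩`, `X + ⟨1 + eᵢ⟩`.
Both vectors lie outside `X` and outside every `Cⱼ ⊇ X`, and the two sums differ, since by
Steinitz exchange `eᵢ ∈ X + ⟨1⟩` would put some `1 + a • eᵢ` into `X`.
-/

open Submodule

theorem one_add_single_apply_ne_zero {ι R : Type*} [DecidableEq ι] [AddMonoidWithOne R]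
    [NeZero (1 : R)] {i j : ι} (hij : j ≠ i) (a : R) : (1 + Pi.single i a : ι → R) j ≠ 0 := by
  simp [hij]

section LinearAlgebra

variable {K V : Type*} [DivisionRing K] [AddCommGroup V] [Module K V] {X : Submodule K V} {v w : V}

theorem sup_span_singleton_inf_sup_span_singleton (hw : w ∉ X ⊔ span K {v}) :
    (X ⊔ span K {v}) ⊓ (X ⊔ span K {w}) = X := by
  have wcovBy (u : V) : X ⩿ X ⊔ span K {u} :=
    sup_comm X (span K {u}) ▸ wcovBy_span_singleton_sup u X
  have hne : X ⊔ span K {v} ≠ X ⊔ span K {w} := fun h =>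
    hw (h ▸ mem_sup_right (mem_span_singleton_self w))
  exact (wcovBy v).inf_eq (wcovBy w) hne

theorem exists_add_smul_mem_of_mem_sup_span_singleton (hv : v ∈ X ⊔ span K {w}) (hX : v ∉ X) :
    ∃ a : K, w + a • v ∈ X := by
  obtain ⟨x, hx, y, hy, rfl⟩ := mem_sup.1 hv
  obtain ⟨c, rfl⟩ := mem_span_singleton.1 hy
  have hc : c ≠ 0 := by
    rintro rfl
    exact hX (by simpa using hx)
  refine ⟨-c⁻¹, ?_⟩
  have : w + -c⁻¹ • (x + c • w) = -c⁻¹ • x := by simp [smul_smul, hc]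
  exact this ▸ X.smul_mem _ hx

theorem exists_notMem_of_finrank_lt (h : Module.finrank K X < Module.finrank K V) : ∃ u, u ∉ X := by
  by_contra! hX
  exact h.ne (eq_top_iff'.2 hX ▸ finrank_top K V)

theorem ncard_le_finrank_of_single_mem {ι : Type*} [Finite ι] [DecidableEq ι]
    {X : Submodule K (ι → K)} {s : Set ι} (h : ∀ i ∈ s, Pi.single i 1 ∈ X) :
    s.ncard ≤ Module.finrank K X := by
  let e : s → X := fun i => ⟨Pi.single i.1 1, h i i.2⟩
  have he : LinearIndependent K e := .of_comp X.subtype <|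
    (Pi.linearIndependent_single_one ι K).comp _ Subtype.val_injective
  have := Fintype.ofFinite s
  rw [← Nat.card_coe_set_eq, Nat.card_eq_fintype_card]
  exact he.fintype_card_le_finrank

end LinearAlgebra

section Codes

variable {F : Type*} [Field F] {n : ℕ} {X Y : Submodule F (Fin n → F)}

/-- `Y` contains a vector differing from `(1,…,1)` in at most one coordinate: over a general field
this replaces the alternative `(1,…,1) ∈ Y` or `(1,…,1) + eᵢ ∈ Y`. The coefficient `a = 0` covers
`(1,…,1)` itself. -/
def ContainsNearOnes (Y : Submodule F (Fin n → F)) : Prop :=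
  ∃ (i : Fin n) (a : F), 1 + Pi.single i a ∈ Y

theorem ContainsNearOnes.mono (hX : ContainsNearOnes X) (hXY : X ≤ Y) : ContainsNearOnes Y :=
  let ⟨i, a, h⟩ := hX
  ⟨i, a, hXY h⟩

theorem ContainsNearOnes.one_mem_or_one_add_single_one_mem
    {Y : Submodule (ZMod 2) (Fin n → ZMod 2)} (hY : ContainsNearOnes Y) :
    1 ∈ Y ∨ ∃ i, 1 + Pi.single i 1 ∈ Y := by
  obtain ⟨i, a, h⟩ := hY
  obtain rfl | rfl := (by decide : ∀ b : ZMod 2, b = 0 ∨ b = 1) a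
  · exact .inl (by simpa only [Pi.single_zero, add_zero] using h)
  · exact .inr ⟨i, h⟩

theorem sup_span_singleton_mem_ndCodes {v : Fin n → F} (hv : v ∉ X)
    (hvX : ∀ i, X ≤ coordHyp F n i → v i ≠ 0) :
    X ⊔ span F {v} ∈ ndCodes F n (Module.finrank F X + 1) :=
  ⟨finrank_sup_span_singleton hv, fun i hi =>
    hvX i (le_sup_left.trans hi) (hi (mem_sup_right (mem_span_singleton_self v)))⟩

theorem exists_ndCodes_inf_eq (hX : ∀ i, ¬ X ≤ coordHyp F n i) (hdim : Module.finrank F X + 1 < n) :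
    ∃ Y ∈ ndCodes F n (Module.finrank F X + 1), ∃ Y' ∈ ndCodes F n (Module.finrank F X + 1),
      X = Y ⊓ Y' := by
  obtain ⟨v, hv⟩ : ∃ v, v ∉ X := exists_notMem_of_finrank_lt (by rw [Module.finrank_fin_fun]; omega)
  obtain ⟨w, hw⟩ : ∃ w, w ∉ X ⊔ span F {v} :=
    exists_notMem_of_finrank_lt (by simpa [finrank_sup_span_singleton hv] using hdim)
  exact ⟨_, sup_span_singleton_mem_ndCodes hv fun i hi => absurd hi (hX i),
    _, sup_span_singleton_mem_ndCodes (fun h => hw (mem_sup_left h)) fun i hi => absurd hi (hX i),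
    (sup_span_singleton_inf_sup_span_singleton hw).symm⟩

theorem exists_not_le_coordHyp_single_notMem (hc : Module.finrank F X + numHyp F n X < n) :
    ∃ i, ¬ X ≤ coordHyp F n i ∧ Pi.single i 1 ∉ X := by
  by_contra! h
  have hle : {i | X ≤ coordHyp F n i}ᶜ.ncard ≤ Module.finrank F X :=
    ncard_le_finrank_of_single_mem h
  have hadd := Set.ncard_add_ncard_compl {i | X ≤ coordHyp F n i}
  rw [Nat.card_fin] at hadd
  simp only [numHyp] at hc
  omega

theorem exists_ndCodes_inf_eq_of_single_notMem {i : Fin n} (hi : ¬ X ≤ coordHyp F n i)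
    (hei : Pi.single i 1 ∉ X) (hX : ∀ a, 1 + Pi.single i a ∉ X) :
    ∃ Y ∈ ndCodes F n (Module.finrank F X + 1), ∃ Y' ∈ ndCodes F n (Module.finrank F X + 1),
      X = Y ⊓ Y' ∧ ContainsNearOnes Y ∧ ContainsNearOnes Y' := by
  have hone : (1 : Fin n → F) ∉ X := by simpa using hX 0
  have hsum : 1 + Pi.single i 1 ∉ X ⊔ span F {1} := fun h => by
    have he : Pi.single i 1 ∈ X ⊔ span F {1} :=
      (add_mem_cancel_left (mem_sup_right (mem_span_singleton_self 1))).1 h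
    obtain ⟨a, ha⟩ := exists_add_smul_mem_of_mem_sup_span_singleton he hei
    exact hX a (by simpa [← Pi.single_smul] using ha)
  refine ⟨X ⊔ span F {1}, sup_span_singleton_mem_ndCodes hone fun j _ => one_ne_zero,
    X ⊔ span F {1 + Pi.single i 1}, sup_span_singleton_mem_ndCodes (hX 1) fun j hj =>
      one_add_single_apply_ne_zero (by rintro rfl; exact hi hj) 1,
    (sup_span_singleton_inf_sup_span_singleton hsum).symm, ⟨i, 0, ?_⟩, ⟨i, 1, ?_⟩⟩
  · simpa using mem_sup_right (mem_span_singleton_self (1 : Fin n → F))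
  · exact mem_sup_right (mem_span_singleton_self _)

end Codes

theorem stmt_16_general {F : Type*} [Field F] {n : ℕ} (X : Submodule F (Fin n → F))
    (hdim : Module.finrank F X + 1 < n) (hc : Module.finrank F X + numHyp F n X < n) :
    ∃ Y ∈ ndCodes F n (Module.finrank F X + 1), ∃ Y' ∈ ndCodes F n (Module.finrank F X + 1),
      X = Y ⊓ Y' ∧ ContainsNearOnes Y ∧ ContainsNearOnes Y' := by
  by_cases h : (∀ i, ¬ X ≤ coordHyp F n i) ∧ ContainsNearOnes X
  · obtain ⟨hX, hones⟩ := h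
    obtain ⟨Y, hY, Y', hY', hYY'⟩ := exists_ndCodes_inf_eq hX hdim
    exact ⟨Y, hY, Y', hY', hYY', hones.mono (hYY'.trans_le inf_le_left),
      hones.mono (hYY'.trans_le inf_le_right)⟩
  · obtain ⟨i, hi, hei⟩ := exists_not_le_coordHyp_single_notMem hc
    refine exists_ndCodes_inf_eq_of_single_notMem hi hei fun a ha => h ⟨fun j hj => ?_, i, a, ha⟩
    exact one_add_single_apply_ne_zero (by rintro rfl; exact hi hj) a (hj ha)

/-- (`q = 2`, `1 < k < n-1`.) For every `(k-1)`-dimensional subspace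
`X ⊂ F_2^n` with `c(X) ≤ n - k`, there exist `Y, Y' ∈ C(n,k)_2` with `X = Y ∩ Y'`, each
of `Y, Y'` containing the all-ones vector or a vector `(1,…,1) + eᵢ`. -/
theorem stmt_16 (n k : ℕ) (hk : 1 < k) (hkn : k < n - 1)
    (X : Submodule (ZMod 2) (Fin n → ZMod 2))
    (hX : Module.finrank (ZMod 2) ↥X = k - 1)
    (hc : numHyp (ZMod 2) n X ≤ n - k) :
    ∃ Y ∈ ndCodes (ZMod 2) n k, ∃ Y' ∈ ndCodes (ZMod 2) n k,
      X = Y ⊓ Y' ∧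
      ((fun _ => 1 : Fin n → ZMod 2) ∈ Y ∨
        ∃ i : Fin n, (fun _ => 1 : Fin n → ZMod 2) + Pi.single i 1 ∈ Y) ∧
      ((fun _ => 1 : Fin n → ZMod 2) ∈ Y' ∨
        ∃ i : Fin n, (fun _ => 1 : Fin n → ZMod 2) + Pi.single i 1 ∈ Y') := by
  obtain rfl : k = Module.finrank (ZMod 2) X + 1 := by omega
  obtain ⟨Y, hY, Y', hY', hX_eq, hones, hones'⟩ := stmt_16_general X (by omega) (by omega)
  exact ⟨Y, hY, Y', hY', hX_eq, hones.one_mem_or_one_add_single_one_mem,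
    hones'.one_mem_or_one_add_single_one_mem⟩
end

section
/- Let q be a prime power, k ≥ 3, 1 < k < n−1, and let f : C(n,k)_q → G_k(V) be an injective map sending adjacent pairs to adjacent pairs such that for every X ∈ C(n,k−1)_q the image f(S(X)) is a star of Γ_k(V). Let f' : C(n,k−1)_q → G_{k−1}(V) be the induced map, i.e., f(S(X)) = S(f'(X)) for every X ∈ C(n,k−1)_q. Then f' is injective, f'(X) and f'(Y) are adjacent whenever X, Y ∈ C(n,k−1)_q are adjacent, and for every X ∈ C(n,k−2)_q the image f'(S(X)) is a star of Γ_{k−1}(V) (where here S(X) ⊂ G_{k−1}(V) is the set of (k−1)-dimensional subspaces containing X). -/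
/-!
Encode a star `S(W)` as the set of upper covers of `W` in the subspace lattice, so that modularity
replaces most dimension counts. If `A ≠ B` have a common upper cover `Z`, then `f Z` covers both
`f' A` and `f' B`, hence `f Z = f' A ⊔ f' B`; this gives injectivity and adjacency.

For the stars, regard the upper covers of `X` as points and their upper covers as lines. Then `f'`
maps points to points, `f` maps lines to lines, and every line through a point `f' W` is the image
of a line through `W`. Distinct lines have distinct images, so three non-collinear points have
pairwise adjacent, non-collinear images, and these share the intersection `X'` of any two of them.
Every subspace of dimension `m` over `X` has its points sent into a subspace of dimension at most
`m` over `X'`, and equality holds because it holds for the whole space. Now let `Z'` be a point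
over `X'`. The lines joining `Z'` to two image points `f' A` and `f' B` are images of lines through
`A` and `B`. These two lines are coplanar because their images are, so they meet in a point, and
this point is sent to `Z'`.
-/

section ModularLattice

variable {α : Type*} [Lattice α]

theorem upper_covBy_of_covBy_of_le [IsWeakUpperModularLattice α] {a b x z : α}
    (hxa : x ⋖ a) (haz : a ⋖ z) (hxb : x ⋖ b) (hbz : b ≤ z) : b ⋖ z := by
  obtain rfl | hab := eq_or_ne a b
  · exact haz
  have hx : a ⊓ b = x := hxa.wcovBy.inf_eq hxb.wcovBy hab
  rw [← hx] at hxa hxb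
  have hz : a ⊔ b = z :=
    (haz.eq_or_eq le_sup_left (sup_le haz.le hbz)).resolve_left
      (hxa.sup_of_inf_of_inf_left hxb).ne'
  exact hz ▸ hxa.sup_of_inf_of_inf_right hxb

theorem lower_covBy_of_covBy_of_le [IsWeakLowerModularLattice α] {a b x z : α}
    (hxa : x ⋖ a) (haz : a ⋖ z) (hbz : b ⋖ z) (hxb : x ≤ b) : x ⋖ b :=
  (upper_covBy_of_covBy_of_le haz.toDual hxa.toDual hbz.toDual hxb).ofDual

theorem covBy_sup_of_covBy_of_ne_left [IsWeakUpperModularLattice α] {a b x : α}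
    (ha : x ⋖ a) (hb : x ⋖ b) (hab : a ≠ b) : a ⋖ a ⊔ b := by
  have hx : a ⊓ b = x := ha.wcovBy.inf_eq hb.wcovBy hab
  exact covBy_sup_of_inf_covBy_of_inf_covBy_left (hx ▸ ha) (hx ▸ hb)

theorem covBy_sup_of_covBy_of_ne_right [IsWeakUpperModularLattice α] {a b x : α}
    (ha : x ⋖ a) (hb : x ⋖ b) (hab : a ≠ b) : b ⋖ a ⊔ b :=
  sup_comm b a ▸ covBy_sup_of_covBy_of_ne_left hb ha hab.symm

theorem covBy_sup_of_covBy_of_not_le [IsUpperModularLattice α] {u d x : α}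
    (hxu : x ≤ u) (hd : x ⋖ d) (hdu : ¬ d ≤ u) : u ⋖ u ⊔ d := by
  have hx : u ⊓ d = x :=
    (hd.eq_or_eq (le_inf hxu hd.le) inf_le_right).resolve_right (hdu ∘ inf_eq_right.1)
  exact covBy_sup_of_inf_covBy_right (hx ▸ hd)

theorem inf_covBy_of_covBy_of_ne [IsWeakLowerModularLattice α] {a b z : α}
    (ha : a ⋖ z) (hb : b ⋖ z) (hab : a ≠ b) : a ⊓ b ⋖ a :=
  (covBy_sup_of_covBy_of_ne_left ha.toDual hb.toDual hab).ofDual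

theorem inf_le_or_le_sup_of_inf_covBy {a b c : α} (hab : a ⊓ b < a)
    (hca : c ⊓ a ⋖ c) (hcb : c ⊓ b ⋖ c) (hac : c ⊓ a ⋖ a) : a ⊓ b ≤ c ∨ c ≤ a ⊔ b := by
  by_cases hne : c ⊓ a = c ⊓ b
  · have hle : c ⊓ a ≤ a ⊓ b := le_inf inf_le_right (hne.trans_le inf_le_right)
    have hinf : a ⊓ b = c ⊓ a := (hac.eq_or_eq hle inf_le_left).resolve_right hab.ne
    exact .inl (hinf.trans_le inf_le_left)
  · right
    calc c = c ⊓ a ⊔ c ⊓ b := (hca.wcovBy.sup_eq hcb.wcovBy hne).symm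
      _ ≤ a ⊔ b := sup_le_sup inf_le_right inf_le_right

theorem exists_covBy_covBy_ne [IsModularLattice α] [BoundedOrder α] [ComplementedLattice α]
    {a x z : α} (hxa : x ⋖ a) (haz : a ⋖ z) : ∃ b, b ≠ a ∧ x ⋖ b ∧ b ⋖ z := by
  obtain ⟨b, rfl, rfl⟩ := IsModularLattice.exists_inf_eq_and_sup_eq hxa.le haz.le
  refine ⟨b, ?_, inf_covBy_of_covBy_sup_left haz, covBy_sup_of_inf_covBy_left hxa⟩
  rintro rfl
  exact haz.ne (sup_idem b).symm

end ModularLattice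

/-- `f'` is the map induced by `f` on the centres `w ∈ S` of stars: `f` maps the star of `w` onto
the star of `f' w`, and it is injective on the union of the stars involved. The star of `w` is
encoded as the set of upper covers of `w`; the last field makes `w` recoverable from its star. -/
structure InducesOnStars {α : Type*} [Preorder α] (f f' : α → α) (S : Set α) : Prop where
  image_star : ∀ w ∈ S, f '' {z | w ⋖ z} = {z | f' w ⋖ z}
  injOn : Set.InjOn f {z | ∃ w ∈ S, w ⋖ z}
  nontrivial_star : ∀ w ∈ S, {z | w ⋖ z}.Nontrivial

namespace InducesOnStars

section Lattice

variable {α : Type*} [Lattice α] {f f' : α → α} {S : Set α}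

theorem map_covBy_map (h : InducesOnStars f f' S) {w z : α} (hw : w ∈ S) (hz : w ⋖ z) :
    f' w ⋖ f z :=
  (h.image_star w hw).subset ⟨z, hz, rfl⟩

theorem exists_covBy_map_eq (h : InducesOnStars f f' S) {w z' : α} (hw : w ∈ S)
    (hz' : f' w ⋖ z') : ∃ z, w ⋖ z ∧ f z = z' :=
  (h.image_star w hw).superset hz'

theorem ne_top [OrderTop α] (h : InducesOnStars f f' S) {w z : α} (hw : w ∈ S) (hz : w ⋖ z) :
    z ≠ ⊤ := by
  rintro rfl
  obtain ⟨z, hwz, hz_ne⟩ := (h.nontrivial_star w hw).exists_ne ⊤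
  exact hz_ne ((hz.eq_or_eq hwz.le le_top).resolve_left hwz.ne')

theorem injOn_center (h : InducesOnStars f f' S) : Set.InjOn f' S := by
  intro v hv w hw hvw
  have himage : f '' {z | v ⋖ z} = f '' {z | w ⋖ z} := by
    rw [h.image_star v hv, h.image_star w hw, hvw]
  have hstar : {z | v ⋖ z} = {z | w ⋖ z} :=
    (h.injOn.image_eq_image_iff (fun _ hz => ⟨v, hv, hz⟩) (fun _ hz => ⟨w, hw, hz⟩)).1 himage
  obtain ⟨y, hy, z, hz, hyz⟩ := h.nontrivial_star v hv
  have hy' : w ⋖ y := hstar.subset hy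
  have hz' : w ⋖ z := hstar.subset hz
  exact (hy.wcovBy.inf_eq hz.wcovBy hyz).symm.trans (hy'.wcovBy.inf_eq hz'.wcovBy hyz)

theorem map_eq_sup (h : InducesOnStars f f' S) {v w z : α} (hv : v ∈ S) (hw : w ∈ S)
    (hvw : v ≠ w) (hvz : v ⋖ z) (hwz : w ⋖ z) : f z = f' v ⊔ f' w :=
  ((h.map_covBy_map hv hvz).wcovBy.sup_eq (h.map_covBy_map hw hwz).wcovBy
    (h.injOn_center.ne hv hw hvw)).symm

theorem inf_covBy_of_inf_covBy [IsModularLattice α] (h : InducesOnStars f f' S) {v w : α}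
    (hv : v ∈ S) (hw : w ∈ S) (hvw : v ≠ w) (hinf_v : v ⊓ w ⋖ v) (hinf_w : v ⊓ w ⋖ w) :
    f' v ⊓ f' w ⋖ f' v :=
  inf_covBy_of_covBy_of_ne (h.map_covBy_map hv (hinf_v.sup_of_inf_of_inf_left hinf_w))
    (h.map_covBy_map hw (hinf_v.sup_of_inf_of_inf_right hinf_w)) (h.injOn_center.ne hv hw hvw)

variable [IsModularLattice α] {x : α}

theorem inf_covBy_of_covBy (h : InducesOnStars f f' S) (hx : {w | x ⋖ w} ⊆ S) {a b : α}
    (ha : x ⋖ a) (hb : x ⋖ b) (hab : a ≠ b) : f' a ⊓ f' b ⋖ f' a := by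
  have hinf : a ⊓ b = x := ha.wcovBy.inf_eq hb.wcovBy hab
  exact h.inf_covBy_of_inf_covBy (hx ha) (hx hb) hab (hinf ▸ ha) (hinf ▸ hb)

theorem map_sup_of_covBy (h : InducesOnStars f f' S) (hx : {w | x ⋖ w} ⊆ S) {a b : α}
    (ha : x ⋖ a) (hb : x ⋖ b) (hab : a ≠ b) : f (a ⊔ b) = f' a ⊔ f' b :=
  h.map_eq_sup (hx ha) (hx hb) hab (covBy_sup_of_covBy_of_ne_left ha hb hab)
    (covBy_sup_of_covBy_of_ne_right ha hb hab)

theorem mapsTo_Iic_map (h : InducesOnStars f f' S) (hx : {w | x ⋖ w} ⊆ S) {a z : α}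
    (ha : x ⋖ a) (haz : a ⋖ z) : Set.MapsTo f' {w | x ⋖ w ∧ w ≤ z} (Set.Iic (f z)) :=
  fun _ hw => (h.map_covBy_map (hx hw.1) (upper_covBy_of_covBy_of_le ha haz hw.1 hw.2)).le

/-- A point of `u ⊔ d` off `u` lies on the line joining `d` to a point `r` of `u`. -/
theorem mapsTo_Iic_sup (h : InducesOnStars f f' S) (hx : {w | x ⋖ w} ⊆ S) {u u' d : α}
    (hxu : x ≤ u) (hd : x ⋖ d) (hu : Set.MapsTo f' {w | x ⋖ w ∧ w ≤ u} (Set.Iic u')) :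
    Set.MapsTo f' {w | x ⋖ w ∧ w ≤ u ⊔ d} (Set.Iic (u' ⊔ f' d)) := by
  rintro w ⟨hw, hwud⟩
  by_cases hwu : w ≤ u
  · exact (hu ⟨hw, hwu⟩).trans le_sup_left
  obtain rfl | hwd := eq_or_ne w d
  · exact le_sup_right
  have hdu : ¬ d ≤ u := fun hdu => hwu (hwud.trans (sup_le le_rfl hdu))
  have hsup : u ⊔ (w ⊔ d) = u ⊔ d :=
    le_antisymm (sup_le le_sup_left (sup_le hwud le_sup_right)) (sup_le_sup_left le_sup_right u)
  have hd_line : d ⋖ w ⊔ d := covBy_sup_of_covBy_of_ne_right hw hd hwd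
  set r := u ⊓ (w ⊔ d)
  have hr_line : r ⋖ w ⊔ d :=
    inf_covBy_of_covBy_sup_left (hsup ▸ covBy_sup_of_covBy_of_not_le hxu hd hdu)
  have hr : x ⋖ r :=
    lower_covBy_of_covBy_of_le hd hd_line hr_line (le_inf hxu (hd.le.trans hd_line.le))
  have hrd : r ≠ d := fun hrd => hdu (hrd ▸ inf_le_left)
  calc f' w ≤ f (w ⊔ d) :=
        (h.map_covBy_map (hx hw) (covBy_sup_of_covBy_of_ne_left hw hd hwd)).le
    _ = f' r ⊔ f' d := h.map_eq_sup (hx hr) (hx hd) hrd hr_line hd_line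
    _ ≤ u' ⊔ f' d := sup_le_sup_right (hu ⟨hr, inf_le_left⟩) _

theorem inf_le_map_of_not_le_sup (h : InducesOnStars f f' S) (hx : {w | x ⋖ w} ⊆ S) {a b c : α}
    (ha : x ⋖ a) (hb : x ⋖ b) (hc : x ⋖ c) (hab : a ≠ b) (hcab : ¬ c ≤ a ⊔ b) :
    f' a ⊓ f' b ≤ f' c := by
  have hac : a ≠ c := fun hac => hcab (hac ▸ le_sup_left)
  have hbc : b ≠ c := fun hbc => hcab (hbc ▸ le_sup_right)
  have hac_inf : f' c ⊓ f' a ⋖ f' a := inf_comm (f' a) (f' c) ▸ h.inf_covBy_of_covBy hx ha hc hac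
  refine (inf_le_or_le_sup_of_inf_covBy (h.inf_covBy_of_covBy hx ha hb hab).lt
    (h.inf_covBy_of_covBy hx hc ha hac.symm) (h.inf_covBy_of_covBy hx hc hb hbc.symm)
    hac_inf).resolve_right fun hle => hcab ?_
  have hab_line : a ⋖ a ⊔ b := covBy_sup_of_covBy_of_ne_left ha hb hab
  have hac_line : a ⋖ a ⊔ c := covBy_sup_of_covBy_of_ne_left ha hc hac
  have hle_map : f (a ⊔ c) ≤ f (a ⊔ b) := by
    rw [h.map_sup_of_covBy hx ha hc hac, h.map_sup_of_covBy hx ha hb hab]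
    exact sup_le le_sup_left hle
  have hac_map : f' a ⋖ f (a ⊔ c) := h.map_covBy_map (hx ha) hac_line
  have heq_map : f (a ⊔ c) = f (a ⊔ b) :=
    ((h.map_covBy_map (hx ha) hab_line).eq_or_eq hac_map.le hle_map).resolve_left hac_map.ne'
  have heq : a ⊔ c = a ⊔ b := h.injOn ⟨a, hx ha, hac_line⟩ ⟨a, hx ha, hab_line⟩ heq_map
  exact le_sup_right.trans_eq heq

/-- The point `d` outside the line `a ⊔ b` handles the points `c` on that line. -/
theorem inf_covBy_map (h : InducesOnStars f f' S) (hx : {w | x ⋖ w} ⊆ S) {a b c d : α}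
    (ha : x ⋖ a) (hb : x ⋖ b) (hc : x ⋖ c) (hd : x ⋖ d) (hab : a ≠ b) (hdab : ¬ d ≤ a ⊔ b) :
    f' a ⊓ f' b ⋖ f' c := by
  obtain rfl | hac := eq_or_ne a c
  · exact h.inf_covBy_of_covBy hx ha hb hab
  have had : a ≠ d := fun had => hdab (had ▸ le_sup_left)
  have hab_inf := h.inf_covBy_of_covBy hx ha hb hab
  have hle : f' a ⊓ f' b ≤ f' c := by
    by_cases hcab : c ≤ a ⊔ b
    · have hlines : (a ⊔ b) ⊓ (a ⊔ d) = a :=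
        (covBy_sup_of_covBy_of_ne_left ha hb hab).wcovBy.inf_eq
          (covBy_sup_of_covBy_of_ne_left ha hd had).wcovBy
          fun heq => hdab (heq ▸ le_sup_right)
      have hcad : ¬ c ≤ a ⊔ d := fun hcad =>
        hac ((ha.eq_or_eq hc.le ((le_inf hcab hcad).trans_eq hlines)).resolve_left hc.ne').symm
      have hinf : f' a ⊓ f' b = f' a ⊓ f' d :=
        (((hab_inf.eq_or_eq (le_inf inf_le_left (h.inf_le_map_of_not_le_sup hx ha hb hd hab hdab))
          inf_le_left).resolve_right (h.inf_covBy_of_covBy hx ha hd had).ne)).symm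
      exact hinf.trans_le (h.inf_le_map_of_not_le_sup hx ha hd hc had hcad)
    · exact h.inf_le_map_of_not_le_sup hx ha hb hc hab hcab
  have hline : f' a ⋖ f (a ⊔ c) :=
    h.map_covBy_map (hx ha) (covBy_sup_of_covBy_of_ne_left ha hc hac)
  exact lower_covBy_of_covBy_of_le hab_inf hline
    (h.map_covBy_map (hx hc) (covBy_sup_of_covBy_of_ne_right ha hc hac)) hle

end Lattice

end InducesOnStars

section Submodule

open Module

variable {K V : Type*} [DivisionRing K] [AddCommGroup V] [Module K V]

theorem exists_covBy_not_le {x u : Submodule K V} (hxu : x ≤ u) (hu : u ≠ ⊤) :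
    ∃ d, x ⋖ d ∧ ¬ d ≤ u := by
  obtain ⟨v, -, hv⟩ := SetLike.exists_of_lt hu.lt_top
  exact ⟨_, Submodule.covBy_span_singleton_sup fun hvx => hv (hxu hvx), fun hle =>
    hv (hle (Submodule.mem_sup_left (Submodule.mem_span_singleton_self v)))⟩

variable [FiniteDimensional K V]

theorem covBy_iff_finrank_eq_add_one {x y : Submodule K V} :
    x ⋖ y ↔ x ≤ y ∧ finrank K y = finrank K x + 1 := by
  constructor
  · intro h
    obtain ⟨v, hvy, hvx⟩ := SetLike.exists_of_lt h.lt
    have hle : x ⊔ Submodule.span K {v} ≤ y :=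
      sup_le h.le ((Submodule.span_singleton_le_iff_mem v y).2 hvy)
    have hspan : x ⊔ Submodule.span K {v} = y :=
      (h.eq_or_eq le_sup_left hle).resolve_left fun heq =>
        hvx (left_eq_sup.1 heq.symm (Submodule.mem_span_singleton_self v))
    exact ⟨h.le, hspan ▸ Submodule.finrank_sup_span_singleton hvx⟩
  · rintro ⟨hxy, hfinrank⟩
    refine ⟨hxy.lt_of_ne fun heq => ?_, fun z hxz hzy => ?_⟩
    · rw [heq] at hfinrank
      omega
    · have := Submodule.finrank_lt_finrank_of_lt hxz
      have := Submodule.finrank_lt_finrank_of_lt hzy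
      omega

theorem finrank_sup_le_of_covBy {x u d : Submodule K V} (hxu : x ≤ u) (hd : x ⋖ d) :
    finrank K (u ⊔ d : Submodule K V) ≤ finrank K u + 1 := by
  by_cases hdu : d ≤ u
  · rw [sup_eq_left.2 hdu]
    omega
  · exact (covBy_iff_finrank_eq_add_one.1 (covBy_sup_of_covBy_of_not_le hxu hd hdu)).2.le

end Submodule

namespace InducesOnStars

open Module

variable {K V : Type*} [DivisionRing K] [AddCommGroup V] [Module K V]
  {f f' : Submodule K V → Submodule K V} {S : Set (Submodule K V)} {x x' : Submodule K V}

theorem exists_forall_covBy_map (h : InducesOnStars f f' S) (hx : {w | x ⋖ w} ⊆ S)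
    (hx_top : x ≠ ⊤) : ∃ x', ∀ w, x ⋖ w → x' ⋖ f' w := by
  obtain ⟨a, ha, -⟩ := exists_covBy_not_le le_rfl hx_top
  obtain ⟨z, hz⟩ := (h.nontrivial_star a (hx ha)).nonempty
  obtain ⟨b, hb, hba⟩ := exists_covBy_not_le ha.le (hz.lt.trans_le le_top).ne
  have hab : a ≠ b := fun hab => hba hab.ge
  have hline : a ⋖ a ⊔ b := covBy_sup_of_covBy_of_ne_left ha hb hab
  obtain ⟨d, hd, hdab⟩ := exists_covBy_not_le (ha.le.trans hline.le) (h.ne_top (hx ha) hline)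
  exact ⟨f' a ⊓ f' b, fun w hw => h.inf_covBy_map hx ha hb hw hd hab hdab⟩

theorem eq_top_of_mapsTo (h : InducesOnStars f f' S) (hx : {w | x ⋖ w} ⊆ S) (hx_top : x ≠ ⊤)
    {u' : Submodule K V} (hu : Set.MapsTo f' {w | x ⋖ w} (Set.Iic u')) : u' = ⊤ := by
  by_contra hu_top
  obtain ⟨a, ha, -⟩ := exists_covBy_not_le le_rfl hx_top
  obtain ⟨z', hz', hz'u⟩ := exists_covBy_not_le (hu ha) hu_top
  obtain ⟨z, hz, rfl⟩ := h.exists_covBy_map_eq (hx ha) hz'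
  obtain ⟨b, hba, hb, hbz⟩ := exists_covBy_covBy_ne ha hz
  rw [h.map_eq_sup (hx ha) (hx hb) hba.symm hz hbz] at hz'u
  exact hz'u (sup_le (hu ha) (hu hb))

variable [FiniteDimensional K V]

/-- Adding points to `u` one at a time up to the whole space, the rank of `u'` grows at most as
fast as that of `u`, but ends at the full rank. -/
theorem finrank_le_of_mapsTo (h : InducesOnStars f f' S) (hx : {w | x ⋖ w} ⊆ S) (hx_top : x ≠ ⊤)
    (hx' : ∀ w, x ⋖ w → x' ⋖ f' w) {u u' : Submodule K V} (hxu : x ≤ u) (hxu' : x' ≤ u')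
    (hu : Set.MapsTo f' {w | x ⋖ w ∧ w ≤ u} (Set.Iic u')) : finrank K u ≤ finrank K u' := by
  induction u using WellFoundedGT.induction generalizing u' with
  | ind u ih =>
    obtain rfl | hu_top := eq_or_ne u ⊤
    · rw [h.eq_top_of_mapsTo hx hx_top fun w hw => hu ⟨hw, le_top⟩]
    obtain ⟨d, hd, hdu⟩ := exists_covBy_not_le hxu hu_top
    have hcov : u ⋖ u ⊔ d := covBy_sup_of_covBy_of_not_le hxu hd hdu
    have hsup := ih _ hcov.lt (hxu.trans le_sup_left) (hxu'.trans le_sup_left)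
      (h.mapsTo_Iic_sup hx hxu hd hu)
    have hfinrank := (covBy_iff_finrank_eq_add_one.1 hcov).2
    have hfinrank' := finrank_sup_le_of_covBy hxu' (hx' d hd)
    omega

theorem le_of_map_le (h : InducesOnStars f f' S) (hx : {w | x ⋖ w} ⊆ S) (hx_top : x ≠ ⊤)
    (hx' : ∀ w, x ⋖ w → x' ⋖ f' w) {u u' c : Submodule K V} (hxu : x ≤ u) (hxu' : x' ≤ u')
    (hu : Set.MapsTo f' {w | x ⋖ w ∧ w ≤ u} (Set.Iic u')) (hfinrank : finrank K u' ≤ finrank K u)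
    (hc : x ⋖ c) (hcu : f' c ≤ u') : c ≤ u := by
  have hsup : Set.MapsTo f' {w | x ⋖ w ∧ w ≤ u ⊔ c} (Set.Iic u') :=
    sup_eq_left.2 hcu ▸ h.mapsTo_Iic_sup hx hxu hc hu
  have hle := h.finrank_le_of_mapsTo hx hx_top hx' (hxu.trans le_sup_left) hxu' hsup
  exact left_eq_sup.1 (Submodule.eq_of_le_of_finrank_le le_sup_left (hle.trans hfinrank))

theorem line_le_sup_of_map_le_sup (h : InducesOnStars f f' S) (hx : {w | x ⋖ w} ⊆ S)
    (hx' : ∀ w, x ⋖ w → x' ⋖ f' w) (hS : ∀ w ∈ S, finrank K (f' w) = finrank K w)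
    {a b l m : Submodule K V} (ha : x ⋖ a) (hal : a ⋖ l) (hb : x ⋖ b) (hbm : b ⋖ m)
    (hbl : ¬ b ≤ l) (hm : f m ≤ f l ⊔ f' b) : m ≤ l ⊔ b := by
  have hx_top : x ≠ ⊤ := (ha.lt.trans_le le_top).ne
  have hxl : x ≤ l := ha.le.trans hal.le
  have hal' : f' a ⋖ f l := h.map_covBy_map (hx ha) hal
  have hxl' : x' ≤ f l := (hx' a ha).le.trans hal'.le
  have hfinrank : finrank K (f l ⊔ f' b : Submodule K V) ≤ finrank K (l ⊔ b : Submodule K V) :=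
    calc finrank K (f l ⊔ f' b : Submodule K V)
      _ ≤ finrank K (f l) + 1 := finrank_sup_le_of_covBy hxl' (hx' b hb)
      _ = finrank K l + 1 := by
        rw [(covBy_iff_finrank_eq_add_one.1 hal').2, hS a (hx ha),
          (covBy_iff_finrank_eq_add_one.1 hal).2]
      _ = finrank K (l ⊔ b : Submodule K V) :=
        (covBy_iff_finrank_eq_add_one.1 (covBy_sup_of_covBy_of_not_le hxl hb hbl)).2.symm
  obtain ⟨c, hcb, hc, hcm⟩ := exists_covBy_covBy_ne hb hbm
  have hcl : c ≤ l ⊔ b :=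
    h.le_of_map_le hx hx_top hx' (hxl.trans le_sup_left) (hxl'.trans le_sup_left)
      (h.mapsTo_Iic_sup hx hxl hb (h.mapsTo_Iic_map hx ha hal)) hfinrank hc
      ((h.map_covBy_map (hx hc) hcm).le.trans hm)
  rw [← hcm.wcovBy.sup_eq hbm.wcovBy hcb]
  exact sup_le hcl le_sup_right

theorem exists_map_eq_of_covBy (h : InducesOnStars f f' S) (hx : {w | x ⋖ w} ⊆ S) (hx_top : x ≠ ⊤)
    (hx' : ∀ w, x ⋖ w → x' ⋖ f' w) (hS : ∀ w ∈ S, finrank K (f' w) = finrank K w)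
    {z' : Submodule K V} (hz' : x' ⋖ z') : ∃ c, x ⋖ c ∧ f' c = z' := by
  by_contra! hne
  have joining_line : ∀ w, x ⋖ w → ∃ l, w ⋖ l ∧ f l = f' w ⊔ z' := fun w hw =>
    h.exists_covBy_map_eq (hx hw) (covBy_sup_of_covBy_of_ne_left (hx' w hw) hz' (hne w hw))
  obtain ⟨a, ha, -⟩ := exists_covBy_not_le le_rfl hx_top
  obtain ⟨l, hal, hl⟩ := joining_line a ha
  obtain ⟨b, hb, hbl⟩ := exists_covBy_not_le (ha.le.trans hal.le) (h.ne_top (hx ha) hal)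
  obtain ⟨m, hbm, hm⟩ := joining_line b hb
  have hlm : l ≠ m := fun hlm => hbl (hlm ▸ hbm.le)
  have hml : m ≤ l ⊔ b := h.line_le_sup_of_map_le_sup hx hx' hS ha hal hb hbm hbl <| by
    rw [hl, hm]
    exact sup_le le_sup_right (le_sup_right.trans le_sup_left)
  have hplane : l ⊔ m = l ⊔ b :=
    le_antisymm (sup_le le_sup_left hml) (sup_le_sup_left hbm.le l)
  have hmeet_m : l ⊓ m ⋖ m :=
    inf_covBy_of_covBy_sup_left
      (hplane ▸ covBy_sup_of_covBy_of_not_le (ha.le.trans hal.le) hb hbl)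
  have hmeet : x ⋖ l ⊓ m :=
    lower_covBy_of_covBy_of_le hb hbm hmeet_m (le_inf (ha.le.trans hal.le) (hb.le.trans hbm.le))
  have hz'_line {w : Submodule K V} (hw : x ⋖ w) : z' ⋖ f' w ⊔ z' :=
    covBy_sup_of_covBy_of_ne_right (hx' w hw) hz' (hne w hw)
  have hmap_meet : f l ⊓ f m = z' :=
    (hl ▸ hz'_line ha).wcovBy.inf_eq (hm ▸ hz'_line hb).wcovBy
      (h.injOn.ne ⟨a, hx ha, hal⟩ ⟨b, hx hb, hbm⟩ hlm)
  have hle : f' (l ⊓ m) ≤ z' := hmap_meet ▸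
    le_inf (h.mapsTo_Iic_map hx ha hal ⟨hmeet, inf_le_left⟩)
      (h.mapsTo_Iic_map hx hb hbm ⟨hmeet, inf_le_right⟩)
  have hcov := hx' _ hmeet
  exact hne _ hmeet ((hz'.eq_or_eq hcov.le hle).resolve_left hcov.ne')

theorem exists_image_star_eq (h : InducesOnStars f f' S) (hx : {w | x ⋖ w} ⊆ S) (hx_top : x ≠ ⊤)
    (hS : ∀ w ∈ S, finrank K (f' w) = finrank K w) :
    ∃ x' : Submodule K V, finrank K x' = finrank K x ∧ f' '' {w | x ⋖ w} = {w | x' ⋖ w} := by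
  obtain ⟨x', hx'⟩ := h.exists_forall_covBy_map hx hx_top
  obtain ⟨a, ha, -⟩ := exists_covBy_not_le le_rfl hx_top
  refine ⟨x', ?_, Set.Subset.antisymm (Set.image_subset_iff.2 hx')
    fun z' hz' => h.exists_map_eq_of_covBy hx hx_top hx' hS hz'⟩
  have hfinrank := (covBy_iff_finrank_eq_add_one.1 ha).2
  have hfinrank' := (covBy_iff_finrank_eq_add_one.1 (hx' a ha)).2
  have := hS a (hx ha)
  omega

end InducesOnStars

section Codes

open Module

variable {F : Type*} [Field F] {n d : ℕ} {X Y : Submodule F (Fin n → F)}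

theorem starOf_eq_setOf_covBy (hX : finrank F X = d) : starOf F n (d + 1) X = {W | X ⋖ W} := by
  ext W
  rw [Set.mem_ofPred_eq, covBy_iff_finrank_eq_add_one, hX]
  exact and_comm

theorem adjSub_symm (h : adjSub F n d X Y) : adjSub F n d Y X := by
  rwa [adjSub, inf_comm]

theorem adjSub_succ_iff_inf_covBy (hX : finrank F X = d + 1) :
    adjSub F n (d + 1) X Y ↔ X ⊓ Y ⋖ X := by
  rw [covBy_iff_finrank_eq_add_one, hX, Nat.add_right_cancel_iff, eq_comm,
    and_iff_right inf_le_left, adjSub, Nat.add_sub_cancel]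

theorem mem_ndCodes_of_covBy (hX : X ∈ ndCodes F n d) (hXY : X ⋖ Y) : Y ∈ ndCodes F n (d + 1) :=
  ⟨hX.1 ▸ (covBy_iff_finrank_eq_add_one.1 hXY).2, fun i hY => hX.2 i (hXY.le.trans hY)⟩

theorem ne_top_of_finrank_lt (hX : finrank F X < n) : X ≠ ⊤ := by
  rintro rfl
  simp at hX

theorem inducesOnStars_ndCodes {f f' : Submodule F (Fin n → F) → Submodule F (Fin n → F)}
    (hd : d + 1 < n) (hinj : Set.InjOn f (ndCodes F n (d + 1)))
    (hf' : ∀ X ∈ ndCodes F n d, finrank F (f' X) = d ∧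
      f '' starOf F n (d + 1) X = starOf F n (d + 1) (f' X)) :
    InducesOnStars f f' (ndCodes F n d) where
  image_star W hW := by
    rw [← starOf_eq_setOf_covBy hW.1, ← starOf_eq_setOf_covBy (hf' W hW).1, (hf' W hW).2]
  injOn := hinj.mono fun _ ⟨_, hW, hWZ⟩ => mem_ndCodes_of_covBy hW hWZ
  nontrivial_star W hW := by
    have hW_top : W ≠ ⊤ := ne_top_of_finrank_lt (by rw [hW.1]; omega)
    obtain ⟨Y, hY, -⟩ := exists_covBy_not_le le_rfl hW_top
    have hY_top : Y ≠ ⊤ := ne_top_of_finrank_lt ((mem_ndCodes_of_covBy hW hY).1 ▸ hd)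
    obtain ⟨Z, hZ, hZY⟩ := exists_covBy_not_le hY.le hY_top
    exact ⟨Y, hY, Z, hZ, fun hYZ => hZY hYZ.ge⟩

end Codes

theorem stmt_18_general (n k : ℕ) (F : Type*) [Field F] (hk : 1 < k) (hkn : k < n)
    (f : Submodule F (Fin n → F) → Submodule F (Fin n → F))
    (hinj : Set.InjOn f (ndCodes F n k))
    (f' : Submodule F (Fin n → F) → Submodule F (Fin n → F))
    (hf' : ∀ X ∈ ndCodes F n (k - 1),
      Module.finrank F ↥(f' X) = k - 1 ∧ f '' starOf F n k X = starOf F n k (f' X)) :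
    Set.InjOn f' (ndCodes F n (k - 1)) ∧
    (∀ X ∈ ndCodes F n (k - 1), ∀ Y ∈ ndCodes F n (k - 1),
      adjSub F n (k - 1) X Y → adjSub F n (k - 1) (f' X) (f' Y)) ∧
    (∀ X ∈ ndCodes F n (k - 2), ∃ X' : Submodule F (Fin n → F),
      Module.finrank F ↥X' = k - 2 ∧
        f' '' starOf F n (k - 1) X = starOf F n (k - 1) X') := by
  obtain ⟨j, rfl⟩ : ∃ j, k = j + 2 := ⟨k - 2, by omega⟩
  have h : InducesOnStars f f' (ndCodes F n (j + 1)) := inducesOnStars_ndCodes hkn hinj hf'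
  refine ⟨h.injOn_center, fun X hX Y hY hXY => ?_, fun X hX => ?_⟩
  · have hinf_X : X ⊓ Y ⋖ X := (adjSub_succ_iff_inf_covBy hX.1).1 hXY
    have hinf_Y : X ⊓ Y ⋖ Y :=
      inf_comm Y X ▸ (adjSub_succ_iff_inf_covBy hY.1).1 (adjSub_symm hXY)
    have hne : X ≠ Y := fun hne => hinf_X.ne (inf_eq_left.2 hne.le)
    exact (adjSub_succ_iff_inf_covBy (hf' X hX).1).2
      (h.inf_covBy_of_inf_covBy hX hY hne hinf_X hinf_Y)
  · have hX_top : X ≠ ⊤ := ne_top_of_finrank_lt (hX.1.trans_lt (by omega))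
    obtain ⟨X', hX', himage⟩ := h.exists_image_star_eq (fun _ => mem_ndCodes_of_covBy hX) hX_top
      fun W hW => (hf' W hW).1.trans hW.1.symm
    have hX'_finrank : Module.finrank F X' = j := hX'.trans hX.1
    refine ⟨X', hX'_finrank, ?_⟩
    exact (starOf_eq_setOf_covBy hX.1).symm ▸ (starOf_eq_setOf_covBy hX'_finrank).symm ▸ himage

/-- (`k ≥ 3`, `1 < k < n-1`.) Let `f : C(n,k)_q → G_k(V)` be injective,
adjacency-preserving and send every maximal star `S(X)`, `X ∈ C(n,k-1)_q`, to a star of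
`Γ_k(V)`; let `f' : C(n,k-1)_q → G_{k-1}(V)` be the induced map, i.e.
`f(S(X)) = S(f'(X))`. Then `f'` is injective, adjacency-preserving, and sends every
maximal star `S(X)`, `X ∈ C(n,k-2)_q`, to a star of `Γ_{k-1}(V)`. -/
theorem stmt_18 (q n k : ℕ) (F : Type*) [Field F] [Fintype F]
    (hF : Fintype.card F = q) (hk3 : 3 ≤ k) (hk : 1 < k) (hkn : k < n - 1)
    (f : Submodule F (Fin n → F) → Submodule F (Fin n → F))
    (hmem : ∀ X ∈ ndCodes F n k, f X ∈ grass F n k)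
    (hinj : Set.InjOn f (ndCodes F n k))
    (hadj : ∀ X ∈ ndCodes F n k, ∀ Y ∈ ndCodes F n k,
      adjSub F n k X Y → adjSub F n k (f X) (f Y))
    (f' : Submodule F (Fin n → F) → Submodule F (Fin n → F))
    (hf' : ∀ X ∈ ndCodes F n (k - 1),
      Module.finrank F ↥(f' X) = k - 1 ∧ f '' starOf F n k X = starOf F n k (f' X)) :
    Set.InjOn f' (ndCodes F n (k - 1)) ∧
    (∀ X ∈ ndCodes F n (k - 1), ∀ Y ∈ ndCodes F n (k - 1),
      adjSub F n (k - 1) X Y → adjSub F n (k - 1) (f' X) (f' Y)) ∧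
    (∀ X ∈ ndCodes F n (k - 2), ∃ X' : Submodule F (Fin n → F),
      Module.finrank F ↥X' = k - 2 ∧
        f' '' starOf F n (k - 1) X = starOf F n (k - 1) X') :=
  stmt_18_general n k F hk (by omega) f hinj f' hf'
end
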